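/- arXiv:math/0608328 — 2 statements merged into one kernel-verified Lean document; each statement's English description precedes it below -/
import Mathlib

section
/- Let p be a prime, let l ≥ 0 and n be integers with n > p, and let r be an integer. Then F^{(l)}_p(n,r) + [l>0]·F^{(l−1)}_p(n−p, r) ≡ −Σ_{k=1}^{p−1} (1/k)·Σ_{j=0}^{k−1} F^{(l)}_p(n−p+1, r−j) (mod p). -/
open Finset

/-- `x ≡ y (mod p^c)` for rationals: `x = y` or the `p`-adic valuation of `x - y`
is at least `c`. -/
def modCong (p : ℕ) (c : ℤ) (x y : ℚ) : Prop :=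
  x = y ∨ c ≤ padicValRat p (x - y)

/-- The binomial coefficient `binom(x,l) = x(x-1)⋯(x-l+1)/l!` for an integer `x`. -/
def intBinom (x : ℤ) (l : ℕ) : ℚ := (∏ i ∈ Finset.range l, ((x:ℚ) - (i:ℚ))) / (l.factorial : ℚ)

/-- The extended Fleck quotient
`F^{(l)}_{p^a}(n,r) = (-p)^{-⌊(n - l p^a - p^{a-1})/φ(p^a)⌋}
  ∑_{0 ≤ k ≤ n, k ≡ r (mod p^a)} (-1)^k binom(n,k) binom((k-r)/p^a, l)`. -/
noncomputable def Fpa (p a l n : ℕ) (r : ℤ) : ℚ :=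
  (-(p:ℚ)) ^ (-(Int.fdiv ((n:ℤ) - (l:ℤ) * (p:ℤ)^a - (p:ℤ)^(a-1)) (Nat.totient (p^a)))) *
    ∑ k ∈ Finset.range (n+1),
      if ((k:ℤ) - r) % ((p:ℤ)^a) = 0 then
        (-1:ℚ)^k * (n.choose k : ℚ) * intBinom (((k:ℤ) - r) / ((p:ℤ)^a)) l
      else 0

/-!
Let `T` be the linear functional on `ℤ[X]` sending `X ^ k` to
`[k ≡ r (mod p)] binom((k - r) / p, l)`, so that the sum in `F^{(l)}_p(n,r)` is `T ((1 - X) ^ n)`.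
Multiplying by `X ^ j` turns `r` into `r - j`, and by Pascal's rule multiplying by `X ^ p - 1` turns
`l` into `l - 1`. Applying `T` to `(1 - X) ^ m` times
`(1 - X) ^ p = (-1) ^ p (X ^ p - 1)
  - ∑_{0 < k < p} (-1) ^ k binom(p,k) (1 - X) (1 + ⋯ + X ^ (k - 1))`
gives an exact recursion for the sums, and the normalizing powers of `-p` absorb the factor `p` of
`binom(p,k)`. The normalized recursion has integer coefficients, hence shows that the quotients are
integers, and `(-1) ^ p ≡ -1` and
`(-1) ^ k binom(p,k) / p = (-1) ^ k binom(p-1,k-1) / k ≡ -1 / k` modulo `p` then reduce it to the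
claimed congruence.
-/

section Congruence

variable {p : ℕ} [Fact p.Prime] {c : ℤ} {x y : ℚ}

lemma modCong_iff_padicNorm_sub_le : modCong p c x y ↔ padicNorm p (x - y) ≤ (p : ℚ) ^ (-c) := by
  have hp : 1 < (p : ℚ) := mod_cast (Fact.out : p.Prime).one_lt
  rcases eq_or_ne x y with rfl | hxy
  · simp only [modCong, true_or, sub_self, padicNorm.zero, true_iff]
    positivity
  · rw [modCong, or_iff_right hxy, padicNorm.eq_zpow_of_nonzero (sub_ne_zero.mpr hxy),
      zpow_le_zpow_iff_right₀ hp, neg_le_neg_iff]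

lemma modCong.add {x' y' : ℚ} (h : modCong p c x y) (h' : modCong p c x' y') :
    modCong p c (x + x') (y + y') := by
  rw [modCong_iff_padicNorm_sub_le] at *
  rw [add_sub_add_comm]
  exact padicNorm.nonarchimedean.trans (max_le h h')

lemma modCong.sum {ι : Type*} {s : Finset ι} {f g : ι → ℚ} (h : ∀ i ∈ s, modCong p c (f i) (g i)) :
    modCong p c (∑ i ∈ s, f i) (∑ i ∈ s, g i) := by
  simp only [modCong_iff_padicNorm_sub_le] at *
  rw [← sum_sub_distrib]
  exact padicNorm.sum_le' h (by positivity)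

lemma modCong.mul_right {z : ℚ} (h : modCong p c x y) (hz : padicNorm p z ≤ 1) :
    modCong p c (x * z) (y * z) := by
  rw [modCong_iff_padicNorm_sub_le] at *
  rw [← sub_mul, padicNorm.mul]
  exact (mul_le_of_le_one_right (padicNorm.nonneg _) hz).trans h

lemma modCong_one_intCast_iff {a b : ℤ} : modCong p 1 a b ↔ a ≡ b [ZMOD p] := by
  rw [modCong_iff_padicNorm_sub_le, ← Int.cast_sub, Int.modEq_comm, Int.modEq_iff_dvd]
  simpa only [pow_one, Nat.cast_one] using (padicNorm.dvd_iff_norm_le (n := 1)).symm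

lemma padicNorm_le_one_of_mem_range_intCast (hx : x ∈ (Int.castRingHom ℚ).range) :
    padicNorm p x ≤ 1 := by
  obtain ⟨z, rfl⟩ := hx
  exact padicNorm.of_int z

end Congruence

section Binomial

lemma one_sub_pow_eq_sum {R : Type*} [CommRing R] (x : R) (n : ℕ) :
    (1 - x) ^ n = ∑ k ∈ range (n + 1), (-1) ^ k * (n.choose k : R) * x ^ k := by
  rw [sub_eq_neg_add, add_pow]
  refine sum_congr rfl fun k _ => ?_
  rw [neg_pow, one_pow]
  ring

lemma one_sub_pow_eq_sub_sum_geom_sum {R : Type*} [CommRing R] (x : R) {d : ℕ} (hd : 0 < d) :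
    (1 - x) ^ d = (-1) ^ d * (x ^ d - 1) -
      ∑ k ∈ Ico 1 d, (-1) ^ k * (d.choose k : R) * ((1 - x) * ∑ j ∈ range k, x ^ j) := by
  have h_one : ∑ k ∈ range (d + 1), (-1) ^ k * (d.choose k : R) = 0 := by
    simpa [hd.ne'] using (one_sub_pow_eq_sum (1 : R) d).symm
  calc (1 - x) ^ d
      = ∑ k ∈ range (d + 1), (-1) ^ k * (d.choose k : R) * (x ^ k - 1) := by
        simp only [mul_sub, mul_one, sum_sub_distrib, h_one, sub_zero, one_sub_pow_eq_sum]
    _ = (-1) ^ d * (x ^ d - 1) + ∑ k ∈ Ico 1 d, (-1) ^ k * (d.choose k : R) * (x ^ k - 1) := by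
        rw [sum_range_succ, range_eq_Ico, sum_eq_sum_Ico_succ_bot hd, Nat.choose_self]
        simp [add_comm]
    _ = _ := by
        simp only [mul_neg_geom_sum, ← neg_sub (1 : R) (x ^ _), mul_neg, sum_neg_distrib]
        ring

lemma neg_one_pow_mul_choose_pred_modEq_one {p : ℕ} (hp : p.Prime) {k : ℕ} (hk : k < p) :
    (-1) ^ k * ((p - 1).choose k : ℤ) ≡ 1 [ZMOD p] := by
  have h_sum : ∑ i ∈ range (k + 1), (-1) ^ i * (p.choose i : ℤ) = (-1) ^ k * (p - 1).choose k := by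
    simpa only [Nat.sub_add_cancel hp.one_le] using
      Int.alternating_sum_range_choose_eq_choose (n := p - 1) (m := k)
  rw [← h_sum, sum_range_succ']
  have h_dvd : (p : ℤ) ∣ ∑ i ∈ range k, (-1) ^ (i + 1) * (p.choose (i + 1) : ℤ) := by
    refine dvd_sum fun i hi => Dvd.dvd.mul_left (Int.natCast_dvd_natCast.mpr ?_) _
    exact hp.dvd_choose_self i.succ_ne_zero (by rw [mem_range] at hi; omega)
  simpa using (Int.modEq_zero_iff_dvd.mpr h_dvd).add_right 1

lemma choose_div_self_eq_choose_pred_div {n k : ℕ} (hn : 0 < n) (hk : 0 < k) :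
    (n.choose k : ℚ) / n = (n - 1).choose (k - 1) / k := by
  have h : n * (n - 1).choose (k - 1) = n.choose k * k := by
    simpa only [Nat.sub_add_cancel hn, Nat.sub_add_cancel hk] using
      Nat.add_one_mul_choose_eq (n - 1) (k - 1)
  rw [div_eq_div_iff (by positivity) (by positivity), mul_comm _ (n : ℚ)]
  exact_mod_cast h.symm

lemma modCong_neg_one_pow_mul_choose_div {p : ℕ} (hp : p.Prime) {k : ℕ} (hk : k ∈ Ico 1 p) :
    modCong p 1 ((-1) ^ k * (p.choose k / p)) (-1 / k) := by
  have := Fact.mk hp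
  obtain ⟨hk1, hkp⟩ := mem_Ico.mp hk
  have h_unit : padicNorm p (1 / k) ≤ 1 := by
    rw [padicNorm.div, padicNorm.one,
      (padicNorm.nat_eq_one_iff k).mpr (Nat.not_dvd_of_pos_of_lt hk1 hkp), div_one]
  have h_modEq : (-1) ^ k * ((p - 1).choose (k - 1) : ℤ) ≡ -1 [ZMOD p] := by
    have h := (neg_one_pow_mul_choose_pred_modEq_one hp ((Nat.sub_le k 1).trans_lt hkp)).neg
    obtain ⟨i, rfl⟩ := Nat.exists_eq_add_of_le' hk1
    simpa only [pow_succ, mul_neg_one, neg_mul, Nat.add_sub_cancel] using h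
  have h_numerator : modCong p 1 ((-1) ^ k * (p - 1).choose (k - 1)) (-1) := by
    simpa using modCong_one_intCast_iff.mpr h_modEq
  rw [choose_div_self_eq_choose_pred_div hp.pos hk1]
  convert h_numerator.mul_right h_unit using 1 <;> ring

lemma intBinom_eq_choose (x : ℤ) (l : ℕ) : intBinom x l = (Ring.choose x l : ℤ) := by
  have h : ∏ i ∈ range l, (x - i) = l.factorial * Ring.choose x l := by
    rw [← nsmul_eq_mul, ← Ring.descPochhammer_eq_factorial_smul_choose,
      ← Polynomial.eval_eq_smeval, descPochhammer_eval_eq_prod_range]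
  rw [intBinom, div_eq_iff (by positivity), mul_comm]
  exact_mod_cast h

end Binomial

section FleckSum

open Polynomial

/-- The linear functional `X ^ k ↦ [k ≡ r (mod d)] binom((k - r) / d, l)` on `ℤ[X]`, through which
identities between polynomials become identities between Fleck sums. -/
noncomputable def residueBinom (d l : ℕ) (r : ℤ) : ℤ[X] →ₗ[ℤ] ℤ :=
  Polynomial.lsum fun k =>
    (if ((k : ℤ) - r) % d = 0 then Ring.choose (((k : ℤ) - r) / d) l else 0) • LinearMap.id

lemma residueBinom_monomial (d l : ℕ) (r : ℤ) (k : ℕ) (a : ℤ) :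
    residueBinom d l r (monomial k a) =
      (if ((k : ℤ) - r) % d = 0 then Ring.choose (((k : ℤ) - r) / d) l else 0) * a := by
  rw [residueBinom, lsum_apply, sum_monomial_index _ _ (LinearMap.map_zero _), LinearMap.smul_apply,
    LinearMap.id_apply, smul_eq_mul]

lemma residueBinom_X_pow_mul (d l : ℕ) (r : ℤ) (j : ℕ) (f : ℤ[X]) :
    residueBinom d l r (X ^ j * f) = residueBinom d l (r - j) f := by
  induction f using Polynomial.induction_on' with
  | add f g hf hg => rw [mul_add, map_add, map_add, hf, hg]
  | monomial k a =>
    have h_shift : ((k + j : ℕ) : ℤ) - r = k - (r - j) := by push_cast; ring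
    rw [X_pow_mul_monomial, residueBinom_monomial, residueBinom_monomial, h_shift]

lemma residueBinom_X_pow_sub_one_mul {d : ℕ} (hd : 0 < d) (l : ℕ) (r : ℤ) (f : ℤ[X]) :
    residueBinom d l r ((X ^ d - 1) * f) =
      if 0 < l then residueBinom d (l - 1) r f else 0 := by
  induction f using Polynomial.induction_on' with
  | add f g hf hg => split_ifs at * <;> simp only [mul_add, map_add, hf, hg, add_zero]
  | monomial k a =>
    have h_shift : ((k + d : ℕ) : ℤ) - r = (k - r) + 1 * d := by push_cast; ring
    rw [sub_mul, one_mul, map_sub, X_pow_mul_monomial]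
    simp only [residueBinom_monomial]
    rw [h_shift, Int.add_mul_emod_self_right, Int.add_mul_ediv_right _ _ (mod_cast hd.ne')]
    cases l with
    | zero => simp
    | succ l =>
      simp only [Ring.choose_succ_succ, l.succ_pos, if_true, Nat.add_sub_cancel]
      split_ifs <;> ring

/-- The unnormalized extended Fleck sum
`∑_{0 ≤ k ≤ n, k ≡ r (mod d)} (-1)^k binom(n,k) binom((k - r) / d, l)` for an arbitrary modulus `d`,
encoded as a value of `residueBinom`. -/
noncomputable def fleckSum (d l n : ℕ) (r : ℤ) : ℤ := residueBinom d l r ((1 - X) ^ n)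

lemma fleckSum_eq_sum (d l n : ℕ) (r : ℤ) :
    fleckSum d l n r = ∑ k ∈ range (n + 1),
      if ((k : ℤ) - r) % d = 0 then
        (-1) ^ k * (n.choose k : ℤ) * Ring.choose (((k : ℤ) - r) / d) l
      else 0 := by
  rw [fleckSum, one_sub_pow_eq_sum, map_sum]
  refine sum_congr rfl fun k _ => ?_
  have h_monomial : (-1) ^ k * (n.choose k : ℤ[X]) * X ^ k =
      monomial k ((-1) ^ k * (n.choose k : ℤ)) := by
    rw [← C_mul_X_pow_eq_monomial]
    simp
  rw [h_monomial, residueBinom_monomial, ite_mul, zero_mul, mul_comm]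

lemma fleckSum_add_modulus {d : ℕ} (hd : 0 < d) (l m : ℕ) (r : ℤ) :
    fleckSum d l (m + d) r =
      (-1) ^ d * (if 0 < l then fleckSum d (l - 1) m r else 0) -
        ∑ k ∈ Ico 1 d, (-1) ^ k * (d.choose k : ℤ) *
          ∑ j ∈ range k, fleckSum d l (m + 1) (r - j) := by
  have h_poly : (1 - X : ℤ[X]) ^ (m + d) =
      ((-1) ^ d : ℤ) • ((X ^ d - 1) * (1 - X) ^ m) -
        ∑ k ∈ Ico 1 d, ((-1) ^ k * (d.choose k : ℤ)) •
          ∑ j ∈ range k, X ^ j * (1 - X) ^ (m + 1) := by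
    rw [pow_add, one_sub_pow_eq_sub_sum_geom_sum X hd, mul_sub, mul_sum]
    simp only [← sum_mul, zsmul_eq_mul]
    push_cast
    congr 1
    · ring
    · exact sum_congr rfl fun k _ => by ring
  simp only [fleckSum, h_poly, map_sub, map_sum, map_smul, smul_eq_mul, residueBinom_X_pow_mul,
    residueBinom_X_pow_sub_one_mul hd]

end FleckSum

section FleckQuotient

/-- The exponent `⌊(n - l p - 1) / (p - 1)⌋` of `-p` in the extended Fleck quotient modulo a
prime `p`. -/
def fleckExp (p l n : ℕ) : ℤ := ((n : ℤ) - l * p - 1) / ((p : ℤ) - 1)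

lemma fleckExp_add_modulus {p : ℕ} (hp : 1 < p) (l m : ℕ) :
    fleckExp p l (m + p) = fleckExp p l (m + 1) + 1 := by
  rw [fleckExp, fleckExp, ← Int.add_mul_ediv_right _ _ (by omega)]
  congr 1
  push_cast
  ring

lemma fleckExp_pred {l : ℕ} (hl : 0 < l) (p m : ℕ) :
    fleckExp p (l - 1) m = fleckExp p l (m + p) := by
  obtain ⟨l, rfl⟩ := Nat.exists_eq_add_of_le' hl
  rw [fleckExp, fleckExp, Nat.add_sub_cancel]
  congr 1
  push_cast
  ring

lemma fleckExp_nonpos {p n : ℕ} (hp : 1 < p) (l : ℕ) (h : n < p) : fleckExp p l n ≤ 0 := by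
  have hlp : (0 : ℤ) ≤ l * p := by positivity
  exact Int.lt_add_one_iff.mp (Int.ediv_lt_of_lt_mul (by omega) (by omega))

variable {p : ℕ}

lemma Fpa_one_eq_zpow_mul_fleckSum (hp : p.Prime) (l n : ℕ) (r : ℤ) :
    Fpa p 1 l n r = (-(p : ℚ)) ^ (-fleckExp p l n) * fleckSum p l n r := by
  have h_exp : Int.fdiv ((n : ℤ) - l * (p : ℤ) ^ 1 - (p : ℤ) ^ (1 - 1)) (Nat.totient (p ^ 1)) =
      fleckExp p l n := by
    rw [Int.fdiv_eq_ediv_of_nonneg _ (by positivity), pow_one, pow_one, Nat.totient_prime hp,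
      Nat.cast_pred hp.pos, Nat.sub_self, pow_zero, fleckExp]
  rw [Fpa, h_exp, fleckSum_eq_sum]
  simp only [intBinom_eq_choose, pow_one]
  push_cast
  rfl

lemma Fpa_one_add_prime (hp : p.Prime) (l m : ℕ) (r : ℤ) :
    Fpa p 1 l (m + p) r =
      (-1) ^ p * (if 0 < l then Fpa p 1 (l - 1) m r else 0) +
        ∑ k ∈ Ico 1 p, (-1) ^ k * ((p.choose k : ℚ) / p) *
          ∑ j ∈ range k, Fpa p 1 l (m + 1) (r - j) := by
  have hp0 : (p : ℚ) ≠ 0 := mod_cast hp.ne_zero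
  set q : ℚ := (-(p : ℚ)) ^ (-fleckExp p l (m + p)) with hq
  have h_prev : (if 0 < l then Fpa p 1 (l - 1) m r else 0) =
      q * if 0 < l then (fleckSum p (l - 1) m r : ℚ) else 0 := by
    split_ifs with hl
    · rw [Fpa_one_eq_zpow_mul_fleckSum hp, fleckExp_pred hl]
    · rw [mul_zero]
  have h_next (s : ℤ) : q * fleckSum p l (m + 1) s = -(Fpa p 1 l (m + 1) s / p) := by
    rw [hq, Fpa_one_eq_zpow_mul_fleckSum hp, fleckExp_add_modulus hp.one_lt, neg_add,
      ← sub_eq_add_neg, zpow_sub_one₀ (neg_ne_zero.mpr hp0)]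
    field_simp
  rw [Fpa_one_eq_zpow_mul_fleckSum hp, fleckSum_add_modulus hp.pos, ← hq, h_prev]
  push_cast
  simp only [mul_sub, mul_sum, mul_left_comm q, h_next]
  rw [sub_eq_add_neg, ← sum_neg_distrib]
  congr 1
  refine sum_congr rfl fun k _ => ?_
  rw [← sum_neg_distrib]
  exact sum_congr rfl fun j _ => by ring

lemma Fpa_one_mem_range_intCast (hp : p.Prime) (l n : ℕ) (r : ℤ) :
    Fpa p 1 l n r ∈ (Int.castRingHom ℚ).range := by
  induction n using Nat.strong_induction_on generalizing l r with
  | _ n ih =>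
    have h_neg_one : (-1 : ℚ) ∈ (Int.castRingHom ℚ).range := neg_mem (one_mem _)
    rcases lt_or_ge n p with hnp | hpn
    · obtain ⟨e, he⟩ := Int.eq_ofNat_of_zero_le (neg_nonneg.mpr (fleckExp_nonpos hp.one_lt l hnp))
      rw [Fpa_one_eq_zpow_mul_fleckSum hp, he, zpow_natCast]
      exact mul_mem (pow_mem (neg_mem (natCast_mem _ p)) e) ⟨_, rfl⟩
    · obtain ⟨m, rfl⟩ := Nat.exists_eq_add_of_le' hpn
      rw [Fpa_one_add_prime hp]
      refine add_mem (mul_mem (pow_mem h_neg_one p) ?_) (sum_mem fun k hk =>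
        mul_mem (mul_mem (pow_mem h_neg_one k) ?_) (sum_mem fun j _ => ih _ ?_ _ _))
      · split_ifs
        · exact ih m (Nat.lt_add_of_pos_right hp.pos) _ _
        · exact zero_mem _
      · obtain ⟨hk1, hkp⟩ := mem_Ico.mp hk
        rw [← Nat.cast_div (hp.dvd_choose_self (by omega) hkp) (mod_cast hp.ne_zero)]
        exact natCast_mem _ _
      · exact Nat.add_lt_add_left hp.one_lt m

end FleckQuotient

theorem stmt17 (p l n : ℕ) (hp : p.Prime) (hn : p < n) (r : ℤ) :
    modCong p 1
      (Fpa p 1 l n r + (if 0 < l then Fpa p 1 (l-1) (n-p) r else 0))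
      (-(∑ k ∈ Finset.Icc 1 (p-1), (1/(k:ℚ)) *
          ∑ j ∈ Finset.range k, Fpa p 1 l (n-p+1) (r - (j:ℤ)))) := by
  have := Fact.mk hp
  obtain ⟨m, rfl⟩ := Nat.exists_eq_add_of_le' hn.le
  have h_sign : modCong p 1 ((-1) ^ p + 1) 0 := by
    simpa using modCong_one_intCast_iff.mpr ((Int.ModEq.pow_prime_eq_self hp (-1)).add_right 1)
  have h_prev : (if 0 < l then Fpa p 1 (l - 1) m r else 0) ∈ (Int.castRingHom ℚ).range := by
    split_ifs
    exacts [Fpa_one_mem_range_intCast hp _ _ _, zero_mem _]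
  have h_inner (k : ℕ) : ∑ j ∈ range k, Fpa p 1 l (m + 1) (r - j) ∈ (Int.castRingHom ℚ).range :=
    sum_mem fun j _ => Fpa_one_mem_range_intCast hp _ _ _
  rw [Nat.add_sub_cancel, Fpa_one_add_prime hp,
    Icc_sub_one_right_eq_Ico_of_not_isMin (by simp [hp.ne_zero])]
  convert (h_sign.mul_right (padicNorm_le_one_of_mem_range_intCast h_prev)).add
    (modCong.sum fun k hk => (modCong_neg_one_pow_mul_choose_div hp hk).mul_right
      (padicNorm_le_one_of_mem_range_intCast (h_inner k))) using 1
  · ring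
  · simp [neg_div]
end

section
/- Let p be a prime, let a ≥ 1, l ≥ 0, n ≥ 0 be integers, let r be an integer, let s,t ∈ {0,…,p^{a−1}−1}, and let m ≥ 0 be an integer with m ≡ −n (mod p). Assume that at least one of the following holds: (i) a = 1, or p | n, or (p−1) ∤ (n−l−1); (ii) a ≥ 2, p ≠ 2 and ⌊s/p^{a−2}⌋ = 2·⌊t/p^{a−2}⌋; (iii) a ≥ 2 and ⌊s/p^{a−2}⌋ = ⌊t/p^{a−2}⌋ = p−1. Then (−1)^{l+t−1}·F^{(l)}_{p^a}(p^{a−1}·n + s, p^{a−1}·r + t) ≡ [n>l]·binom(s,t)·binom(⌊(n−l−1)/(p−1)⌋, l)·(n−l)_*!·B^{(m)}_{(n−l)^*}(−r) (mod p). -/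
open Finset

/-- `n_*`: the unique integer in `{1,…,p-1}` with `n_* ≡ n (mod p-1)`. -/
def nLow (p n : ℕ) : ℕ := ((((n:ℤ) - 1) % ((p:ℤ) - 1)) + 1).toNat

/-- `n^*`: the unique integer in `{0,…,p-2}` with `n^* ≡ -n (mod p-1)`. -/
def nUp (p n : ℕ) : ℕ := ((-(n:ℤ)) % ((p:ℤ) - 1)).toNat

/-- The `m`-th order Bernoulli number
`B_k^{(m)} = k! ∑_{i₁+⋯+i_m = k} ∏_j B_{i_j}/i_j!`. -/
noncomputable def bernHigher (m k : ℕ) : ℚ :=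
  (k.factorial : ℚ) *
    ∑ i ∈ Finset.Nat.antidiagonalTuple m k, ∏ j, bernoulli (i j) / (i j).factorial

/-- The `m`-th order Bernoulli polynomial
`B_k^{(m)}(t) = ∑_{j=0}^k binom(k,j) B_j^{(m)} t^{k-j}`. -/
noncomputable def bernHigherPoly (m k : ℕ) (t : ℚ) : ℚ :=
  ∑ j ∈ range (k+1), (k.choose j : ℚ) * bernHigher m j * t^(k-j)

/-!
Let `λ = ((X ^ p - 1) - (X - 1) ^ p) / p`, a truncated logarithm of `X`. The linear functional
`X ^ k ↦ [k ≡ r mod q] * ((k - r) / q).choose l` on `ℤ[X]` turns multiplication by `X ^ q - 1` into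
lowering `l` by one, so the relation `λ ^ p ≡ (X ^ p - 1) - p * λ` determines the lowest `p`-adic
term of its values on the powers of `λ`. Modulo `p`, the truncated exponential of `λ` is `X` modulo
`(X - 1) ^ p`; expanding `X ^ j * (X - 1) ^ n` in powers of `λ` therefore produces, as `m ≡ -n`,
the coefficients of `(z / (exp z - 1)) ^ m * exp (j * z)`, which are Bernoulli polynomials of order
`m` at `j` divided by factorials.
For `p ^ a`, keeping every `p ^ (a - 1)`-th coefficient reduces `(X - 1) ^ (p ^ (a - 1) * n + s)` to
a multiple of `(X - 1) ^ n`, up to terms of higher valuation: this is where the binomial coefficient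
`s.choose t` comes from.
-/

namespace FleckQuotient

open Polynomial
open scoped PowerSeries

section ResidueSum

/-- The weight of the exponent `k` in the sums defining extended Fleck quotients modulo `q`. -/
noncomputable def residueWeight (q : ℕ) (r : ℤ) (l k : ℕ) : ℤ :=
  if (q : ℤ) ∣ k - r then Ring.choose ((k - r) / (q : ℤ)) l else 0

/-- The linear functional sending `X ^ k` to `residueWeight q r l k`; evaluated at `(1 - X) ^ n`
it gives the sum defining the extended Fleck quotient. -/
noncomputable def residueSum (q : ℕ) (r : ℤ) (l : ℕ) : ℤ[X] →ₗ[ℤ] ℤ :=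
  Polynomial.lsum fun k => residueWeight q r l k • LinearMap.id

lemma residueWeight_succ_add {q : ℕ} (hq : 0 < q) (r : ℤ) (l k : ℕ) :
    residueWeight q r (l + 1) (k + q) = residueWeight q r (l + 1) k + residueWeight q r l k := by
  have hk : ((k + q : ℕ) : ℤ) - r = (k - r) + q := by push_cast; ring
  simp only [residueWeight, hk, dvd_add_self_right]
  split_ifs with h
  · rw [Int.add_ediv_of_dvd_right dvd_rfl, Int.ediv_self (by positivity), Ring.choose_succ_succ,
      add_comm]
  · rw [add_zero]

lemma residueWeight_zero_add (q : ℕ) (r : ℤ) (k : ℕ) :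
    residueWeight q r 0 (k + q) = residueWeight q r 0 k := by
  have hk : ((k + q : ℕ) : ℤ) - r = (k - r) + q := by push_cast; ring
  simp only [residueWeight, hk, dvd_add_self_right, Ring.choose_zero_right]

variable (q : ℕ) (r : ℤ) (l : ℕ)

lemma residueSum_monomial (k : ℕ) (c : ℤ) :
    residueSum q r l (monomial k c) = residueWeight q r l k * c := by
  simp [residueSum, Polynomial.lsum_apply, Polynomial.sum_monomial_index]

lemma residueSum_X_pow (k : ℕ) : residueSum q r l (X ^ k) = residueWeight q r l k := by
  rw [X_pow_eq_monomial, residueSum_monomial, mul_one]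

lemma residueSum_intCast_mul (c : ℤ) (f : ℤ[X]) :
    residueSum q r l (c * f) = c * residueSum q r l f := by
  rw [← zsmul_eq_mul, map_zsmul, smul_eq_mul]

lemma residueSum_natCast_mul (c : ℕ) (f : ℤ[X]) :
    residueSum q r l (c * f) = c * residueSum q r l f :=
  mod_cast residueSum_intCast_mul q r l c f

lemma residueSum_X_pow_mul (j : ℕ) (f : ℤ[X]) :
    residueSum q r l (X ^ j * f) = residueSum q (r - j) l f := by
  induction f using Polynomial.induction_on' with
  | add f g hf hg => rw [mul_add, map_add, map_add, hf, hg]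
  | monomial k c =>
    rw [X_pow_mul_monomial, residueSum_monomial, residueSum_monomial, residueWeight, residueWeight,
      Nat.cast_add, sub_sub_eq_add_sub]

lemma residueSum_zero_mul (f : ℤ[X]) : residueSum q r 0 ((X ^ q - 1) * f) = 0 := by
  induction f using Polynomial.induction_on' with
  | add f g hf hg => rw [mul_add, map_add, hf, hg, add_zero]
  | monomial k c =>
    rw [sub_mul, one_mul, map_sub, X_pow_mul_monomial, residueSum_monomial, residueSum_monomial,
      residueWeight_zero_add, sub_self]

variable {q}

lemma residueSum_succ_mul (hq : 0 < q) (f : ℤ[X]) :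
    residueSum q r (l + 1) ((X ^ q - 1) * f) = residueSum q r l f := by
  induction f using Polynomial.induction_on' with
  | add f g hf hg => rw [mul_add, map_add, map_add, hf, hg]
  | monomial k c =>
    rw [sub_mul, one_mul, map_sub, X_pow_mul_monomial, residueSum_monomial, residueSum_monomial,
      residueSum_monomial, residueWeight_succ_add hq]
    ring

end ResidueSum

section FleckIdeal

/-- The polynomials whose residue sums modulo `p` are as divisible by `p` as those of
`(X - 1) ^ k`: the exponent `⌊(k - l p - 1) / (p - 1)⌋` of Wan's theorem is written without
division or truncated subtraction. -/
noncomputable def fleckIdeal (p k : ℕ) : Ideal ℤ[X] where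
  carrier := {f | ∀ (r : ℤ) (l c : ℕ), l * p + 1 + c * (p - 1) ≤ k →
    (p : ℤ) ^ c ∣ residueSum p r l f}
  add_mem' hf hg r l c h := by
    rw [map_add]
    exact dvd_add (hf r l c h) (hg r l c h)
  zero_mem' r l c _ := by rw [map_zero]; exact dvd_zero _
  smul_mem' g f hf r l c h := by
    rw [smul_eq_mul]
    induction g using Polynomial.induction_on' with
    | add g₁ g₂ h₁ h₂ =>
      rw [add_mul, map_add]
      exact dvd_add h₁ h₂
    | monomial j b =>
      rw [← C_mul_X_pow_eq_monomial, mul_assoc, eq_intCast, residueSum_intCast_mul,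
        residueSum_X_pow_mul]
      exact (hf _ l c h).mul_left _

variable {p : ℕ}

lemma fleckIdeal_antitone : Antitone (fleckIdeal p) :=
  fun _ _ h _ hf r l c hc => hf r l c (hc.trans h)

lemma residueSum_modEq_of_sub_mem {n l c : ℕ} {f g : ℤ[X]}
    (hfg : f - g ∈ fleckIdeal p (n + (p - 1))) (h : l * p + 1 + c * (p - 1) ≤ n) (r : ℤ) :
    residueSum p r l f ≡ residueSum p r l g [ZMOD (p : ℤ) ^ (c + 1)] := by
  refine (Int.modEq_iff_dvd.2 ?_).symm
  rw [← map_sub]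
  exact hfg r l (c + 1) (by rw [add_mul]; omega)

lemma natCast_mul_mem_fleckIdeal {k : ℕ} {f : ℤ[X]} (hf : f ∈ fleckIdeal p k) :
    (p : ℤ[X]) * f ∈ fleckIdeal p (k + (p - 1)) := by
  intro r l c hc
  rw [residueSum_natCast_mul]
  cases c with
  | zero => simp
  | succ c =>
    rw [pow_succ']
    refine mul_dvd_mul_left _ (hf r l c ?_)
    rw [add_mul] at hc
    omega

lemma natCast_pow_mul_mem_fleckIdeal {k : ℕ} {f : ℤ[X]} (hf : f ∈ fleckIdeal p k) (e : ℕ) :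
    (p : ℤ[X]) ^ e * f ∈ fleckIdeal p (k + e * (p - 1)) := by
  induction e with
  | zero => simpa using hf
  | succ e ih =>
    rw [pow_succ', mul_assoc, add_mul, one_mul, ← add_assoc]
    exact natCast_mul_mem_fleckIdeal ih

end FleckIdeal

section TruncLog

/-- The quotient of `truncLog p` by `X - 1`. -/
noncomputable def logQuot (p : ℕ) : ℤ[X] :=
  ∑ k ∈ Ioo 0 p, (X - 1) ^ (k - 1) * ((p.choose k / p : ℕ) : ℤ[X])

/-- A truncated logarithm of `X`: the polynomial `((X ^ p - 1) - (X - 1) ^ p) / p`. -/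
noncomputable def truncLog (p : ℕ) : ℤ[X] := (X - 1) * logQuot p

variable {p : ℕ} [hp : Fact p.Prime]

lemma X_pow_sub_one_eq : (X ^ p - 1 : ℤ[X]) = (X - 1) ^ p + (p : ℤ[X]) * truncLog p := by
  have h := add_pow_prime_eq hp.out (X - 1 : ℤ[X]) 1
  simp only [sub_add_cancel, one_pow, mul_one] at h
  rw [h, truncLog, logQuot]
  ring

lemma X_sub_one_dvd_logQuot_sub_one : (X - 1 : ℤ[X]) ∣ logQuot p - 1 := by
  have hone : 1 ∈ Ioo 0 p := mem_Ioo.2 ⟨one_pos, hp.out.one_lt⟩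
  rw [logQuot, ← add_sum_erase _ _ hone, Nat.sub_self, pow_zero, one_mul, Nat.choose_one_right,
    Nat.div_self hp.out.pos, Nat.cast_one, add_sub_cancel_left]
  refine dvd_sum fun k hk => Dvd.dvd.mul_right (dvd_pow_self _ ?_) _
  have := (mem_Ioo.1 (mem_of_mem_erase hk)).1
  have := ne_of_mem_erase hk
  omega

-- The inductive step trades `(X - 1) ^ p` for `X ^ p - 1`, which lowers `l`, and for a multiple
-- of `p`, which lowers `c`.
lemma X_sub_one_pow_mem_fleckIdeal (n : ℕ) : (X - 1 : ℤ[X]) ^ n ∈ fleckIdeal p n := by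
  have hp2 := hp.out.two_le
  induction n using Nat.strong_induction_on with
  | _ n ih =>
    intro r l c hc
    rcases lt_or_ge n p with hn | hn
    · have hc0 : c = 0 := by
        by_contra hc0
        have := Nat.le_mul_of_pos_left (p - 1) (Nat.pos_of_ne_zero hc0)
        omega
      rw [hc0, pow_zero]
      exact one_dvd _
    · obtain ⟨k, rfl⟩ := Nat.exists_eq_add_of_le' hn
      have hsplit : (X - 1 : ℤ[X]) ^ (k + p) =
          (X ^ p - 1) * (X - 1) ^ k - (p : ℤ[X]) * (logQuot p * (X - 1) ^ (k + 1)) := by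
        rw [X_pow_sub_one_eq, truncLog]
        ring
      rw [hsplit, map_sub]
      refine dvd_sub ?_ ?_
      · cases l with
        | zero => rw [residueSum_zero_mul]; exact dvd_zero _
        | succ l =>
          rw [residueSum_succ_mul _ _ hp.out.pos]
          refine ih k (by omega) r l c ?_
          rw [add_mul] at hc
          omega
      · exact natCast_mul_mem_fleckIdeal (Ideal.mul_mem_left _ _ (ih (k + 1) (by omega)))
          r l c (by omega)

lemma mul_mem_fleckIdeal {i e k : ℕ} (h : k ≤ i + e * (p - 1)) (f : ℤ[X]) :
    (p : ℤ[X]) ^ e * (X - 1) ^ i * f ∈ fleckIdeal p k :=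
  Ideal.mul_mem_right _ _ (fleckIdeal_antitone h
    (natCast_pow_mul_mem_fleckIdeal (X_sub_one_pow_mem_fleckIdeal i) e))

lemma exists_truncLog_pow_prime_eq : ∃ a b : ℤ[X],
    truncLog p ^ p = (X ^ p - 1) - (p : ℤ[X]) * truncLog p +
      ((X - 1) ^ (2 * p) * a + (p : ℤ[X]) * (X - 1) ^ (p + 1) * b) := by
  obtain ⟨u, hu⟩ := X_sub_one_dvd_logQuot_sub_one (p := p)
  obtain ⟨v, hv⟩ := exists_add_pow_prime_eq hp.out (1 : ℤ[X]) ((X - 1) * u)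
  refine ⟨u ^ p, u * v, ?_⟩
  rw [X_pow_sub_one_eq, add_sub_cancel_right, truncLog, mul_pow, eq_add_of_sub_eq' hu, hv, mul_pow]
  ring

end TruncLog

section LeadingTerm

lemma dvd_residueSum_X_mul_derivative (q : ℕ) (f : ℤ[X]) :
    (q : ℤ) ∣ residueSum q 0 0 (X * derivative f) := by
  induction f using Polynomial.induction_on' with
  | add f g hf hg =>
    rw [map_add, mul_add, map_add]
    exact dvd_add hf hg
  | monomial k c =>
    rw [derivative_monomial, X_mul_monomial, residueSum_monomial, residueWeight]
    split_ifs with h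
    · rcases k with _ | k
      · simp
      · rw [Nat.add_sub_cancel, sub_zero] at *
        exact (h.mul_left _).mul_left _
    · simp

/-- The leading term of the residue sum of `truncLog p ^ n`. For `n ≤ l` it has no meaning, since
`n - l` and the exponents are truncated. -/
def leadingTerm (p n l : ℕ) : ℤ :=
  if (p - 1) ∣ n - l then
    (((n - l) / (p - 1) - 1).choose l : ℤ) * (-(p : ℤ)) ^ ((n - l) / (p - 1) - 1 - l)
  else 0

lemma leadingTerm_of_eq {p n l N : ℕ} (hp : 2 ≤ p) (h : n = l + (N + 1) * (p - 1)) :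
    leadingTerm p n l = (N.choose l : ℤ) * (-(p : ℤ)) ^ (N - l) := by
  have h1 : n - l = (N + 1) * (p - 1) := by omega
  rw [leadingTerm, h1, if_pos (Dvd.intro_left _ rfl), Nat.mul_div_cancel _ (by omega),
    Nat.add_sub_cancel]

lemma leadingTerm_of_not_dvd {p n l : ℕ} (h : ¬ (p - 1) ∣ n - l) : leadingTerm p n l = 0 :=
  if_neg h

lemma exists_eq_add_mul_of_dvd_sub {p n l : ℕ} (hln : l < n) (h : (p - 1) ∣ n - l) :
    ∃ N, n = l + (N + 1) * (p - 1) := by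
  obtain ⟨N, hN⟩ := h
  rcases N with _ | M
  · omega
  · exact ⟨M, by rw [mul_comm]; omega⟩

lemma leadingTerm_zero_add {p n : ℕ} (hp : 2 ≤ p) :
    leadingTerm p (n + p) 0 = -p * leadingTerm p (n + 1) 0 := by
  by_cases h : (p - 1) ∣ n + 1
  · obtain ⟨M, hM⟩ := exists_eq_add_mul_of_dvd_sub n.succ_pos h
    rw [leadingTerm_of_eq hp hM,
      leadingTerm_of_eq (N := M + 1) hp (by rw [add_mul (M + 1) 1]; omega)]
    simp [pow_succ']
  · rw [leadingTerm_of_not_dvd (l := 0) (n := n + 1) h, leadingTerm_of_not_dvd, mul_zero]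
    rwa [show n + p - 0 = n + 1 + (p - 1) by omega, Nat.dvd_add_self_right]

lemma leadingTerm_succ_add {p n l : ℕ} (hp : 2 ≤ p) (h : l * p < n) :
    leadingTerm p (n + p) (l + 1) = leadingTerm p n l + -p * leadingTerm p (n + 1) (l + 1) := by
  have hln : l < n := (Nat.le_mul_of_pos_right l (by omega)).trans_lt h
  by_cases hd : (p - 1) ∣ n - l
  · obtain ⟨M, hM⟩ := exists_eq_add_mul_of_dvd_sub hln hd
    have hlM : l ≤ M := by
      have hlp : l * p = l + l * (p - 1) := by
        rw [Nat.mul_sub_one, Nat.add_sub_cancel' (Nat.le_mul_of_pos_right l (by omega))]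
      have hlt : l * (p - 1) < (M + 1) * (p - 1) := by omega
      exact Nat.le_of_lt_succ (lt_of_mul_lt_mul_right hlt (Nat.zero_le _))
    rw [leadingTerm_of_eq hp hM,
      leadingTerm_of_eq (N := M) (n := n + 1) hp (by omega),
      leadingTerm_of_eq (N := M + 1) (n := n + p) hp (by rw [add_mul _ 1]; omega),
      Nat.choose_succ_succ, Nat.add_sub_add_right]
    rcases hlM.eq_or_lt with rfl | hlt
    · simp
    · rw [show M - l = (M - (l + 1)) + 1 by omega]
      push_cast
      ring
  · rw [leadingTerm_of_not_dvd hd, leadingTerm_of_not_dvd, leadingTerm_of_not_dvd, mul_zero,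
      add_zero]
    · rwa [Nat.add_sub_add_right]
    · rwa [show n + p - (l + 1) = n - l + (p - 1) by omega, Nat.dvd_add_self_right]

variable {p : ℕ} [hp : Fact p.Prime]

lemma dvd_residueSum_X_sub_one_pow_mul (r : ℤ) (f : ℤ[X]) :
    (p : ℤ) ∣ residueSum p r 0 ((X - 1) ^ p * f) := by
  have hmem := mul_mem_fleckIdeal (p := p) (i := p) (e := 0) (k := p) (by omega) f
  rw [pow_zero, one_mul] at hmem
  simpa using hmem r 0 1 (by have := hp.out.two_le; omega)

lemma X_mul_derivative_truncLog :
    X * derivative (truncLog p) = X ^ p - X * (X - 1) ^ (p - 1) := by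
  have h := congrArg derivative (X_pow_sub_one_eq (p := p))
  simp only [derivative_sub, derivative_one, sub_zero, derivative_add, derivative_pow,
    derivative_natCast_mul, derivative_X, mul_one, map_natCast] at h
  have hp0 : (p : ℤ[X]) ≠ 0 := Nat.cast_ne_zero.2 hp.out.ne_zero
  have hX : (X : ℤ[X]) ^ p = X * X ^ (p - 1) := (mul_pow_sub_one hp.out.ne_zero X).symm
  apply mul_left_cancel₀ hp0
  rw [hX]
  linear_combination (-X) * h

lemma residueSum_truncLog_pow_modEq {n : ℕ} (hn : n < p - 1) :
    residueSum p 0 0 (truncLog p ^ n) ≡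
      residueSum p 0 0 (truncLog p ^ n * (X * (X - 1) ^ (p - 1))) [ZMOD p] := by
  have h := dvd_residueSum_X_mul_derivative p (truncLog p ^ (n + 1))
  have hsplit : X * derivative (truncLog p ^ (n + 1)) = ((n + 1 : ℕ) : ℤ[X]) *
      (truncLog p ^ n - truncLog p ^ n * (X * (X - 1) ^ (p - 1)) +
        (X ^ p - 1) * truncLog p ^ n) := by
    rw [derivative_pow_succ]
    push_cast
    simp only [map_add, map_natCast, map_one]
    linear_combination ((n : ℤ[X]) + 1) * truncLog p ^ n * X_mul_derivative_truncLog (p := p)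
  rw [hsplit, residueSum_natCast_mul, map_add, map_sub, residueSum_zero_mul, add_zero] at h
  have hpn : ¬ (p : ℤ) ∣ (n + 1 : ℕ) :=
    mod_cast Nat.not_dvd_of_pos_of_lt n.succ_pos (by omega)
  exact (Int.modEq_iff_dvd.2 (((Nat.prime_iff_prime_int.1 hp.out).dvd_or_dvd h).resolve_left
    hpn)).symm

lemma residueSum_truncLog_pow_modEq_zero {n : ℕ} (hn : 0 < n) (hn' : n < p - 1) :
    residueSum p 0 0 (truncLog p ^ n) ≡ 0 [ZMOD p] := by
  have hsplit : truncLog p ^ n * (X * (X - 1) ^ (p - 1)) =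
      (X - 1) ^ p * (logQuot p * truncLog p ^ (n - 1) * X) := by
    rw [← mul_pow_sub_one hn.ne', ← mul_pow_sub_one hp.out.ne_zero, truncLog]
    ring
  refine (residueSum_truncLog_pow_modEq hn').trans (Int.modEq_zero_iff_dvd.2 ?_)
  rw [hsplit]
  exact dvd_residueSum_X_sub_one_pow_mul _ _

lemma residueSum_truncLog_pow_sub_one_modEq_one :
    residueSum p 0 0 (truncLog p ^ (p - 1)) ≡ 1 [ZMOD p] := by
  obtain ⟨v, hv⟩ : (X - 1 : ℤ[X]) ∣ logQuot p ^ (p - 1) - X := by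
    have hpow := X_sub_one_dvd_logQuot_sub_one.trans (sub_one_dvd_pow_sub_one (logQuot p) (p - 1))
    simpa using dvd_sub hpow (dvd_refl (X - 1 : ℤ[X]))
  have hsplit : truncLog p ^ (p - 1) = X * (X - 1) ^ (p - 1) + (X - 1) ^ p * v := by
    rw [truncLog, mul_pow, ← mul_pow_sub_one hp.out.ne_zero (X - 1 : ℤ[X])]
    linear_combination (X - 1) ^ (p - 1) * hv
  have hone : residueSum p 0 0 1 = 1 := by
    rw [← pow_zero X, residueSum_X_pow, residueWeight]
    simp
  have h0 := residueSum_truncLog_pow_modEq (p := p) (n := 0) (by have := hp.out.two_le; omega)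
  rw [pow_zero, one_mul, hone] at h0
  rw [hsplit, map_add, ← add_zero (1 : ℤ)]
  exact h0.symm.add (Int.modEq_zero_iff_dvd.2 (dvd_residueSum_X_sub_one_pow_mul _ _))

lemma residueSum_truncLog_pow_modEq_leadingTerm_of_lt {n l c : ℕ} (hn : n < p)
    (h : l * p + 1 + c * (p - 1) ≤ n) :
    residueSum p 0 l (truncLog p ^ n) ≡ leadingTerm p n l [ZMOD (p : ℤ) ^ (c + 1)] := by
  have hp2 := hp.out.two_le
  obtain rfl : l = 0 := by
    by_contra h0
    have := Nat.le_mul_of_pos_left p (Nat.pos_of_ne_zero h0)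
    omega
  obtain rfl : c = 0 := by
    by_contra h0
    have := Nat.le_mul_of_pos_left (p - 1) (Nat.pos_of_ne_zero h0)
    omega
  rw [zero_add, pow_one]
  rcases eq_or_ne n (p - 1) with rfl | hne
  · rw [leadingTerm_of_eq (N := 0) hp2 (by omega)]
    simpa using residueSum_truncLog_pow_sub_one_modEq_one
  · rw [leadingTerm_of_not_dvd (Nat.not_dvd_of_pos_of_lt (by omega) (by omega))]
    exact residueSum_truncLog_pow_modEq_zero (by omega) (by omega)

lemma truncLog_pow_add_prime_sub_mem (n : ℕ) :
    truncLog p ^ (n + p) - ((X ^ p - 1) * truncLog p ^ n - (p : ℤ[X]) * truncLog p ^ (n + 1)) ∈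
      fleckIdeal p (n + p + (p - 1)) := by
  have hp2 := hp.out.two_le
  obtain ⟨a, b, hab⟩ := exists_truncLog_pow_prime_eq (p := p)
  have hn : truncLog p ^ n = (X - 1) ^ n * logQuot p ^ n := by
    rw [truncLog, mul_pow]
  have hsplit : truncLog p ^ (n + p) -
      ((X ^ p - 1) * truncLog p ^ n - (p : ℤ[X]) * truncLog p ^ (n + 1)) =
      (p : ℤ[X]) ^ 0 * (X - 1) ^ (n + 2 * p) * (logQuot p ^ n * a) +
        (p : ℤ[X]) ^ 1 * (X - 1) ^ (n + p + 1) * (logQuot p ^ n * b) := by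
    rw [pow_add _ n p, hab]
    linear_combination ((X - 1) ^ (2 * p) * a + (p : ℤ[X]) * (X - 1) ^ (p + 1) * b) * hn
  rw [hsplit]
  exact add_mem (mul_mem_fleckIdeal (by omega) _) (mul_mem_fleckIdeal (by omega) _)

lemma residueSum_truncLog_pow_modEq_leadingTerm {n l c : ℕ} (h : l * p + 1 + c * (p - 1) ≤ n) :
    residueSum p 0 l (truncLog p ^ n) ≡ leadingTerm p n l [ZMOD (p : ℤ) ^ (c + 1)] := by
  have hp2 := hp.out.two_le
  induction n using Nat.strong_induction_on generalizing l c with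
  | _ n ih =>
    rcases lt_or_ge n p with hn | hn
    · exact residueSum_truncLog_pow_modEq_leadingTerm_of_lt hn h
    obtain ⟨k, rfl⟩ := Nat.exists_eq_add_of_le' hn
    have hlower : p * residueSum p 0 l (truncLog p ^ (k + 1)) ≡
        p * leadingTerm p (k + 1) l [ZMOD (p : ℤ) ^ (c + 1)] := by
      rw [pow_succ']
      refine Int.ModEq.mul_left' ?_
      cases c with
      | zero => rw [pow_zero]; exact Int.modEq_one
      | succ c => exact ih (k + 1) (by omega) (by rw [add_mul] at h; omega)
    refine (residueSum_modEq_of_sub_mem (truncLog_pow_add_prime_sub_mem k) h 0).trans ?_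
    rw [map_sub, residueSum_natCast_mul]
    cases l with
    | zero =>
      rw [residueSum_zero_mul, leadingTerm_zero_add hp2, zero_sub, neg_mul]
      exact hlower.neg
    | succ l =>
      rw [add_mul] at h
      rw [residueSum_succ_mul _ _ hp.out.pos, leadingTerm_succ_add hp2 (by omega), neg_mul,
        ← sub_eq_add_neg]
      exact (ih k (by omega) (by omega)).sub hlower

end LeadingTerm

section ReducesTo

/-- `x` is `p`-integral and reduces to `y` modulo `p`. -/
def ReducesTo (p : ℕ) [Fact p.Prime] (x : ℚ) (y : ZMod p) : Prop :=
  ∃ z : ℤ_[p], (z : ℚ_[p]) = x ∧ PadicInt.toZMod z = y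

variable {p : ℕ} [hp : Fact p.Prime] {x x' : ℚ} {y y' : ZMod p}

namespace ReducesTo

lemma add (h : ReducesTo p x y) (h' : ReducesTo p x' y') : ReducesTo p (x + x') (y + y') := by
  obtain ⟨z, hz, rfl⟩ := h
  obtain ⟨z', hz', rfl⟩ := h'
  exact ⟨z + z', by push_cast [hz, hz']; rfl, map_add _ _ _⟩

lemma mul (h : ReducesTo p x y) (h' : ReducesTo p x' y') : ReducesTo p (x * x') (y * y') := by
  obtain ⟨z, hz, rfl⟩ := h
  obtain ⟨z', hz', rfl⟩ := h'
  exact ⟨z * z', by push_cast [hz, hz']; rfl, map_mul _ _ _⟩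

lemma intCast (a : ℤ) : ReducesTo p (a : ℚ) (a : ZMod p) :=
  ⟨a, by push_cast; rfl, map_intCast _ _⟩

lemma natCast (a : ℕ) : ReducesTo p (a : ℚ) (a : ZMod p) :=
  mod_cast intCast (a : ℤ)

lemma zero : ReducesTo p 0 0 := mod_cast natCast 0

lemma one : ReducesTo p 1 1 := mod_cast natCast 1

lemma inv (h : ReducesTo p x y) (hy : y ≠ 0) : ReducesTo p x⁻¹ y⁻¹ := by
  obtain ⟨z, hz, rfl⟩ := h
  obtain ⟨u, rfl⟩ : IsUnit z := by
    rwa [Ne, ← RingHom.mem_ker, PadicInt.ker_toZMod, IsLocalRing.mem_maximalIdeal,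
      mem_nonunits_iff, not_not] at hy
  refine ⟨↑u⁻¹, ?_, by rw [map_units_inv]⟩
  rw [Rat.cast_inv, ← hz]
  exact map_units_inv PadicInt.Coe.ringHom u

lemma sum {ι : Type*} {s : Finset ι} {f : ι → ℚ} {g : ι → ZMod p}
    (h : ∀ i ∈ s, ReducesTo p (f i) (g i)) : ReducesTo p (∑ i ∈ s, f i) (∑ i ∈ s, g i) := by
  classical
  induction s using Finset.induction_on with
  | empty => exact zero
  | insert a s ha ih =>
    rw [sum_insert ha, sum_insert ha]
    exact (h a (mem_insert_self a s)).add (ih fun i hi => h i (mem_insert_of_mem hi))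

lemma unique (h : ReducesTo p x y) (h' : ReducesTo p x y') : y = y' := by
  obtain ⟨z, hz, rfl⟩ := h
  obtain ⟨z', hz', rfl⟩ := h'
  rw [Subtype.coe_injective (hz.trans hz'.symm)]

lemma modCong (h : ReducesTo p x y) (h' : ReducesTo p x' y) : modCong p 1 x x' := by
  obtain ⟨z, hz, rfl⟩ := h
  obtain ⟨z', hz', hzz⟩ := h'
  rw [_root_.modCong, or_iff_not_imp_left, ← sub_eq_zero]
  intro hne
  have hsub : ((z - z' : ℤ_[p]) : ℚ_[p]) = ((x - x' : ℚ) : ℚ_[p]) := by push_cast [hz, hz']; rfl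
  have hne' : z - z' ≠ 0 := fun h0 => hne <| by
    rw [h0, PadicInt.coe_zero] at hsub
    exact_mod_cast hsub.symm
  have hmem : z - z' ∈ Ideal.span {(p : ℤ_[p]) ^ 1} := by
    rw [pow_one, ← PadicInt.maximalIdeal_eq_span_p, ← PadicInt.ker_toZMod, RingHom.mem_ker,
      map_sub, hzz, sub_self]
  rw [← Padic.valuation_ratCast, ← hsub, PadicInt.valuation_coe]
  exact_mod_cast (PadicInt.mem_span_pow_iff_le_valuation _ hne' 1).1 hmem

end ReducesTo

end ReducesTo

section Bernoulli

lemma bernHigher_eq_coeff (m k : ℕ) :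
    bernHigher m k = k.factorial * PowerSeries.coeff k (bernoulliPowerSeries ℚ ^ m) := by
  have hprod : bernoulliPowerSeries ℚ ^ m = ∏ _j : Fin m, bernoulliPowerSeries ℚ := by simp
  rw [bernHigher, hprod, PowerSeries.coeff_prod]
  congr 1
  refine sum_bij' (fun i _ => Finsupp.equivFunOnFinite.symm i) (fun l _ => ⇑l) ?_ ?_
    (fun _ _ => rfl) (fun l _ => Finsupp.ext fun _ => rfl) ?_
  · intro i hi
    simpa [Nat.mem_antidiagonalTuple] using hi
  · intro l hl
    simpa [Nat.mem_antidiagonalTuple] using hl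
  · intro i _
    simp [bernoulliPowerSeries, PowerSeries.coeff_mk]

/-- The power series `exp (x * X)`. Over `ZMod p` the inverse factorials of `i ≥ p` are the junk
value `0`, so that it is the truncated exponential there. -/
def expSeries {K : Type*} [Field K] (x : K) : K⟦X⟧ :=
  PowerSeries.mk fun i => x ^ i * (i.factorial : K)⁻¹

/-- The power series `(exp X - 1) / X`, truncated over `ZMod p` as in `expSeries`. -/
def expQuotSeries (K : Type*) [Field K] : K⟦X⟧ :=
  PowerSeries.mk fun i => ((i + 1).factorial : K)⁻¹

/-- The generating function `(X / (exp X - 1)) ^ m * exp (x * X)` of the Bernoulli polynomials of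
order `m` at `x`. -/
noncomputable def bernoulliSeries {K : Type*} [Field K] (m : ℕ) (x : K) : K⟦X⟧ :=
  (expQuotSeries K)⁻¹ ^ m * expSeries x

section Field

variable {K : Type*} [Field K]

lemma constantCoeff_expQuotSeries : PowerSeries.constantCoeff (expQuotSeries K) = 1 := by
  simp [← PowerSeries.coeff_zero_eq_constantCoeff_apply, expQuotSeries]

lemma expQuotSeries_mul_inv : expQuotSeries K * (expQuotSeries K)⁻¹ = 1 :=
  PowerSeries.mul_inv_cancel _ (by rw [constantCoeff_expQuotSeries]; exact one_ne_zero)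

lemma X_mul_expQuotSeries : PowerSeries.X * expQuotSeries K = expSeries 1 - 1 := by
  ext (_ | i)
  · simp [expSeries]
  · rw [PowerSeries.coeff_succ_X_mul, map_sub, PowerSeries.coeff_one, if_neg i.succ_ne_zero]
    simp [expQuotSeries, expSeries]

lemma expQuotSeries_pow_mul_bernoulliSeries (m : ℕ) (x : K) :
    expQuotSeries K ^ m * bernoulliSeries m x = expSeries x := by
  rw [bernoulliSeries, ← mul_assoc, ← mul_pow, expQuotSeries_mul_inv, one_pow, one_mul]

end Field

lemma expSeries_rat (t : ℚ) : expSeries t = PowerSeries.rescale t (PowerSeries.exp ℚ) := by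
  ext i
  simp [expSeries, PowerSeries.coeff_rescale, PowerSeries.coeff_exp]

lemma bernoulliPowerSeries_eq_inv_expQuotSeries :
    bernoulliPowerSeries ℚ = (expQuotSeries ℚ)⁻¹ := by
  have hexp : expSeries (1 : ℚ) = PowerSeries.exp ℚ := by
    rw [expSeries_rat, PowerSeries.rescale_one, RingHom.id_apply]
  rw [PowerSeries.eq_inv_iff_mul_eq_one (by rw [constantCoeff_expQuotSeries]; exact one_ne_zero)]
  apply mul_left_cancel₀ (PowerSeries.X_ne_zero (R := ℚ))
  rw [mul_left_comm, X_mul_expQuotSeries, hexp, bernoulliPowerSeries_mul_exp_sub_one, mul_one]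

lemma bernHigherPoly_eq_coeff (m k : ℕ) (t : ℚ) :
    bernHigherPoly m k t = k.factorial * PowerSeries.coeff k (bernoulliSeries m t) := by
  rw [bernoulliSeries, ← bernoulliPowerSeries_eq_inv_expQuotSeries, PowerSeries.coeff_mul,
    Nat.sum_antidiagonal_eq_sum_range_succ_mk, bernHigherPoly, mul_sum]
  refine sum_congr rfl fun j hj => ?_
  rw [bernHigher_eq_coeff, expSeries, PowerSeries.coeff_mk,
    Nat.cast_choose ℚ (Nat.lt_succ_iff.1 (mem_range.1 hj))]
  field_simp

/-- Reduction modulo `p` of the coefficients of a power series in degrees below `N`. -/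
def SeriesReducesTo (p : ℕ) [Fact p.Prime] (N : ℕ) (f : ℚ⟦X⟧) (g : (ZMod p)⟦X⟧) : Prop :=
  ∀ i < N, ReducesTo p (PowerSeries.coeff i f) (PowerSeries.coeff i g)

variable {p : ℕ} [hp : Fact p.Prime] {N : ℕ} {f f' : ℚ⟦X⟧} {g g' : (ZMod p)⟦X⟧}

namespace SeriesReducesTo

lemma mul (h : SeriesReducesTo p N f g) (h' : SeriesReducesTo p N f' g') :
    SeriesReducesTo p N (f * f') (g * g') := by
  intro i hi
  rw [PowerSeries.coeff_mul, PowerSeries.coeff_mul]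
  refine ReducesTo.sum fun a ha => ?_
  have := HasAntidiagonal.mem_antidiagonal.1 ha
  exact (h _ (by omega)).mul (h' _ (by omega))

lemma pow (h : SeriesReducesTo p N f g) (n : ℕ) : SeriesReducesTo p N (f ^ n) (g ^ n) := by
  induction n with
  | zero =>
    intro i _
    rw [pow_zero, pow_zero, PowerSeries.coeff_one, PowerSeries.coeff_one]
    split_ifs
    · exact ReducesTo.one
    · exact ReducesTo.zero
  | succ n ih =>
    rw [pow_succ, pow_succ]
    exact ih.mul h

lemma inv (h : SeriesReducesTo p N f g) (hg : PowerSeries.constantCoeff g ≠ 0) :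
    SeriesReducesTo p N f⁻¹ g⁻¹ := by
  intro i hi
  induction i using Nat.strong_induction_on with
  | _ i ih =>
    have hconst : ReducesTo p (PowerSeries.constantCoeff f)⁻¹ (PowerSeries.constantCoeff g)⁻¹ := by
      simpa using (h 0 (by omega)).inv (by simpa using hg)
    rw [PowerSeries.coeff_inv, PowerSeries.coeff_inv]
    split_ifs
    · exact hconst
    · refine ReducesTo.mul ?_ (ReducesTo.sum fun a ha => ?_)
      · simpa using (ReducesTo.intCast (-1)).mul hconst
      · have := HasAntidiagonal.mem_antidiagonal.1 ha
        split_ifs with hlt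
        · exact (h _ (by omega)).mul (ih _ hlt (by omega))
        · exact ReducesTo.zero

end SeriesReducesTo

lemma factorial_ne_zero {i : ℕ} (hi : i < p) : (i.factorial : ZMod p) ≠ 0 := by
  rw [Ne, ZMod.natCast_eq_zero_iff, hp.out.dvd_factorial]
  omega

lemma seriesReducesTo_expSeries (t : ℤ) :
    SeriesReducesTo p p (expSeries (t : ℚ)) (expSeries (t : ZMod p)) := by
  intro i hi
  rw [expSeries, expSeries, PowerSeries.coeff_mk, PowerSeries.coeff_mk]
  exact (mod_cast ReducesTo.intCast (t ^ i) : ReducesTo p ((t : ℚ) ^ i) ((t : ZMod p) ^ i)).mul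
    ((ReducesTo.natCast _).inv (factorial_ne_zero hi))

lemma seriesReducesTo_expQuotSeries :
    SeriesReducesTo p (p - 1) (expQuotSeries ℚ) (expQuotSeries (ZMod p)) := by
  intro i hi
  rw [expQuotSeries, expQuotSeries, PowerSeries.coeff_mk, PowerSeries.coeff_mk]
  exact (ReducesTo.natCast _).inv (factorial_ne_zero (by omega))

lemma reducesTo_bernHigherPoly (m : ℕ) {k : ℕ} (hk : k < p - 1) (t : ℤ) :
    ReducesTo p (bernHigherPoly m k t)
      (k.factorial * PowerSeries.coeff k (bernoulliSeries m (t : ZMod p))) := by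
  have hconst : PowerSeries.constantCoeff (expQuotSeries (ZMod p)) ≠ 0 := by
    rw [constantCoeff_expQuotSeries]
    exact one_ne_zero
  have hexp : SeriesReducesTo p (p - 1) (expSeries (t : ℚ)) (expSeries (t : ZMod p)) :=
    fun i hi => seriesReducesTo_expSeries t i (by omega)
  rw [bernHigherPoly_eq_coeff]
  exact (ReducesTo.natCast _).mul (((seriesReducesTo_expQuotSeries.inv hconst).pow m).mul hexp k hk)

lemma coeff_expSeries_one_pow (q : ℕ) {i : ℕ} (hi : i < p) :
    PowerSeries.coeff i (expSeries (1 : ZMod p) ^ q) =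
      PowerSeries.coeff i (expSeries (q : ZMod p)) := by
  have hone : SeriesReducesTo p p (expSeries (1 : ℚ)) (expSeries (1 : ZMod p)) := by
    simpa using seriesReducesTo_expSeries (p := p) 1
  have hq : SeriesReducesTo p p (expSeries (q : ℚ)) (expSeries (q : ZMod p)) := by
    simpa using seriesReducesTo_expSeries (p := p) q
  have hpow : expSeries (1 : ℚ) ^ q = expSeries (q : ℚ) := by
    rw [expSeries_rat, expSeries_rat, PowerSeries.rescale_one, RingHom.id_apply,
      PowerSeries.exp_pow_eq_rescale_exp]
  exact (hone.pow q i hi).unique (by rw [hpow]; exact hq i hi)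

end Bernoulli

section TruncExp

lemma X_sub_C_pow_succ_dvd_of_dvd_derivative {K : Type*} [Field K] {f : K[X]} {a : K} {N : ℕ}
    (hN : ∀ i, 0 < i → i ≤ N → (i : K) ≠ 0) (hf : f.IsRoot a)
    (hd : (X - C a) ^ N ∣ derivative f) : (X - C a) ^ (N + 1) ∣ f := by
  rw [X_sub_C_pow_dvd_iff, X_pow_dvd_iff] at hd ⊢
  rintro (_ | i) hi
  · simpa [coeff_zero_eq_eval_zero, eval_comp] using hf
  · have hcoeff := hd i (by omega)
    rw [← mul_one ((derivative f).comp _), ← derivative_X_add_C a, mul_comm, ← derivative_comp,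
      coeff_derivative] at hcoeff
    refine (mul_eq_zero.1 hcoeff).resolve_right ?_
    exact_mod_cast hN (i + 1) i.succ_pos (by omega)

/-- Reduction modulo `p` of the coefficients of a polynomial. -/
noncomputable abbrev reduction (p : ℕ) : ℤ[X] →+* (ZMod p)[X] :=
  Polynomial.mapRingHom (Int.castRingHom (ZMod p))

/-- The exponential series modulo `p`, truncated before degree `p`. -/
noncomputable def truncExp (p : ℕ) [Fact p.Prime] : (ZMod p)[X] :=
  PowerSeries.trunc p (expSeries 1)

/-- The polynomial `(truncExp p - 1) / X`. -/
noncomputable def truncExpQuot (p : ℕ) [Fact p.Prime] : (ZMod p)[X] :=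
  PowerSeries.trunc (p - 1) (expQuotSeries (ZMod p))

variable {p : ℕ} [hp : Fact p.Prime]

lemma X_mul_truncExpQuot : X * truncExpQuot p = truncExp p - 1 := by
  ext (_ | i)
  · simp [truncExp, PowerSeries.coeff_trunc, expSeries, hp.out.pos]
  · rw [coeff_X_mul, coeff_sub, coeff_one, if_neg i.succ_ne_zero, truncExpQuot, truncExp,
      PowerSeries.coeff_trunc, PowerSeries.coeff_trunc]
    simp [expQuotSeries, expSeries, Nat.lt_sub_iff_add_lt]

lemma X_pow_dvd_derivative_truncExp_sub :
    X ^ (p - 1) ∣ derivative (truncExp p) - truncExp p := by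
  rw [X_pow_dvd_iff]
  intro i hi
  have hfac := factorial_ne_zero (p := p) (i := i + 1) (by omega)
  rw [coeff_sub, coeff_derivative, truncExp, PowerSeries.coeff_trunc, PowerSeries.coeff_trunc,
    if_pos (by omega), if_pos (by omega), expSeries, PowerSeries.coeff_mk, PowerSeries.coeff_mk]
  rw [Nat.factorial_succ] at hfac ⊢
  push_cast at hfac ⊢
  have := left_ne_zero_of_mul hfac
  have := right_ne_zero_of_mul hfac
  field_simp
  simp

lemma X_sub_one_pow_dvd_X_mul_derivative_sub :
    (X - 1) ^ (p - 1) ∣ X * derivative (reduction p (truncLog p)) - 1 := by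
  have h := congrArg (reduction p) (X_mul_derivative_truncLog (p := p))
  simp only [map_mul, map_sub, map_pow, map_one, coe_mapRingHom, map_X, ← derivative_map] at h
  have hchar : (X - 1 : (ZMod p)[X]) ^ (p - 1) * (X - 1) = X ^ p - 1 := by
    rw [← pow_succ, Nat.sub_add_cancel hp.out.one_le, sub_pow_char, one_pow]
  exact ⟨-1, by rw [coe_mapRingHom, h]; linear_combination -hchar⟩

lemma reduction_truncLog :
    reduction p (truncLog p) = (X - 1) * reduction p (logQuot p) := by
  simp [truncLog]

lemma X_sub_one_pow_dvd_X_mul_derivative_truncExp_comp_sub :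
    (X - 1) ^ (p - 1) ∣ X * derivative ((truncExp p).comp (reduction p (truncLog p))) -
      (truncExp p).comp (reduction p (truncLog p)) := by
  set L := reduction p (truncLog p) with hL
  obtain ⟨v, hv⟩ := X_sub_one_pow_dvd_X_mul_derivative_sub (p := p)
  obtain ⟨w, hw⟩ := X_pow_dvd_derivative_truncExp_sub (p := p)
  have hwL := congrArg (fun f => f.comp L) hw
  simp only [sub_comp, mul_comp, pow_comp, X_comp] at hwL
  have hLpow : L ^ (p - 1) = (X - 1) ^ (p - 1) * reduction p (logQuot p) ^ (p - 1) := by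
    rw [hL, reduction_truncLog, mul_pow]
  rw [derivative_comp]
  exact ⟨v * (derivative (truncExp p)).comp L + reduction p (logQuot p) ^ (p - 1) * w.comp L, by
    linear_combination (derivative (truncExp p)).comp L * hv + hwL + w.comp L * hLpow⟩

-- Multiplying by `X ^ (p - 1)` turns `X * f' - f` into a derivative, as `p - 1 = -1`.
lemma X_sub_one_pow_dvd_of_dvd_X_mul_derivative_sub {f : (ZMod p)[X]} (hf : f.IsRoot 1)
    (hd : (X - 1) ^ (p - 1) ∣ X * derivative f - f) : (X - 1) ^ p ∣ f := by
  have hp2 := hp.out.two_le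
  have hderiv : derivative (X ^ (p - 1) * f) = X ^ (p - 1 - 1) * (X * derivative f - f) := by
    have hX : (X : (ZMod p)[X]) ^ (p - 1) = X * X ^ (p - 1 - 1) :=
      (mul_pow_sub_one (by omega) X).symm
    have hp1 : ((p - 1 : ℕ) : (ZMod p)[X]) = -1 := by
      rw [Nat.cast_sub hp.out.one_le, CharP.cast_eq_zero, Nat.cast_one, zero_sub]
    rw [derivative_mul, derivative_X_pow, map_natCast, hp1, hX]
    ring
  have hdvd : (X - 1) ^ p ∣ X ^ (p - 1) * f := by
    have h := X_sub_C_pow_succ_dvd_of_dvd_derivative (f := X ^ (p - 1) * f) (a := 1) (N := p - 1)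
      ?_ (by simp [hf.eq_zero]) ?_
    · rwa [Nat.sub_add_cancel hp.out.one_le, C_1] at h
    · intro i hi hip
      rw [Ne, ZMod.natCast_eq_zero_iff]
      exact Nat.not_dvd_of_pos_of_lt hi (by omega)
    · rw [hderiv, C_1]
      exact hd.mul_left _
  have hcop : IsCoprime (X - 1 : (ZMod p)[X]) X := ⟨-1, 1, by ring⟩
  exact (hcop.pow (m := p) (n := p - 1)).dvd_of_dvd_mul_left hdvd

lemma X_sub_one_pow_dvd_truncExp_comp_sub_X :
    (X - 1) ^ p ∣ (truncExp p).comp (reduction p (truncLog p)) - X := by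
  have hconst : (truncExp p).eval 0 = 1 := by
    rw [← coeff_zero_eq_eval_zero, truncExp, PowerSeries.coeff_trunc, if_pos hp.out.pos]
    simp [expSeries]
  refine X_sub_one_pow_dvd_of_dvd_X_mul_derivative_sub ?_ ?_
  · rw [IsRoot.def, eval_sub, eval_comp, reduction_truncLog]
    simp [hconst]
  · convert X_sub_one_pow_dvd_X_mul_derivative_truncExp_comp_sub (p := p) using 1
    rw [derivative_sub, derivative_X]
    ring

lemma X_sub_one_pow_dvd_logQuot_pow_sub_one {k : ℕ} (hk : p ∣ k) :
    (X - 1) ^ (p - 1) ∣ reduction p (logQuot p) ^ k - 1 := by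
  obtain ⟨c, rfl⟩ := hk
  have h := map_dvd (reduction p) (X_sub_one_dvd_logQuot_sub_one (p := p))
  have hchar := pow_dvd_pow_of_dvd h p
  simp only [map_sub, coe_mapRingHom, map_X, Polynomial.map_one, sub_pow_char, one_pow] at hchar
  rw [pow_mul]
  refine ((pow_dvd_pow _ (Nat.sub_le p 1)).trans ?_).trans (sub_one_dvd_pow_sub_one _ _)
  rwa [sub_pow_char, one_pow]

lemma X_sub_one_pow_dvd_logQuot_mul_truncExpQuot_comp_sub_one :
    (X - 1) ^ (p - 1) ∣
      reduction p (logQuot p) * (truncExpQuot p).comp (reduction p (truncLog p)) - 1 := by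
  have hne : (X - 1 : (ZMod p)[X]) ≠ 0 := X_sub_C_ne_zero 1
  have hcomp := congrArg (fun f => f.comp (reduction p (truncLog p))) (X_mul_truncExpQuot (p := p))
  simp only [mul_comp, X_comp, sub_comp, one_comp] at hcomp
  rw [← mul_dvd_mul_iff_left hne, ← pow_succ', Nat.sub_add_cancel hp.out.one_le]
  convert X_sub_one_pow_dvd_truncExp_comp_sub_X (p := p) using 1
  linear_combination hcomp -
    (truncExpQuot p).comp (reduction p (truncLog p)) * reduction_truncLog (p := p)

lemma X_pow_dvd_of_trunc_coe_eq {K : Type*} [Field K] {f g : K[X]} {N : ℕ}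
    (h : PowerSeries.trunc N (f : K⟦X⟧) = PowerSeries.trunc N (g : K⟦X⟧)) : X ^ N ∣ f - g := by
  rw [X_pow_dvd_iff]
  intro i hi
  have hcoeff := congrArg (fun f => f.coeff i) h
  simp only [PowerSeries.coeff_trunc, if_pos hi, coeff_coe] at hcoeff
  rw [coeff_sub, hcoeff, sub_self]

/-- The Bernoulli series `(X / (exp X - 1)) ^ m * exp (x * X)` modulo `p`, truncated before the
first degree in which its coefficients cease to be `p`-integral. -/
noncomputable def truncBernoulli (p : ℕ) [Fact p.Prime] (m : ℕ) (x : ZMod p) : (ZMod p)[X] :=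
  PowerSeries.trunc (p - 1) (bernoulliSeries m x)

lemma X_pow_dvd_truncExpQuot_pow_mul_truncBernoulli_sub (m q : ℕ) :
    X ^ (p - 1) ∣ truncExpQuot p ^ m * truncBernoulli p m q - truncExp p ^ q := by
  apply X_pow_dvd_of_trunc_coe_eq
  have hleft : PowerSeries.trunc (p - 1)
      ((truncExpQuot p ^ m * truncBernoulli p m q : (ZMod p)[X]) : (ZMod p)⟦X⟧) =
        PowerSeries.trunc (p - 1) (expSeries (q : ZMod p)) := by
    rw [Polynomial.coe_mul, Polynomial.coe_pow, truncBernoulli, PowerSeries.trunc_mul_trunc,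
      truncExpQuot, ← PowerSeries.trunc_trunc_mul, PowerSeries.trunc_trunc_pow,
      PowerSeries.trunc_trunc_mul, expQuotSeries_pow_mul_bernoulliSeries]
  have hright : PowerSeries.trunc (p - 1) ((truncExp p ^ q : (ZMod p)[X]) : (ZMod p)⟦X⟧) =
      PowerSeries.trunc (p - 1) (expSeries (1 : ZMod p) ^ q) := by
    rw [Polynomial.coe_pow, truncExp, ← PowerSeries.trunc_trunc_of_le _ (Nat.sub_le p 1),
      PowerSeries.trunc_trunc_pow, PowerSeries.trunc_trunc_of_le _ (Nat.sub_le p 1)]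
  rw [hleft, hright]
  ext i
  simp only [PowerSeries.coeff_trunc]
  split_ifs with hi
  · exact (coeff_expSeries_one_pow q (by omega)).symm
  · rfl

lemma X_sub_one_pow_dvd_logQuot_pow_mul_truncBernoulli_comp_sub {m n : ℕ} (hmn : p ∣ m + n)
    (q : ℕ) : (X - 1) ^ (p - 1) ∣ reduction p (logQuot p) ^ n *
      (truncBernoulli p m q).comp (reduction p (truncLog p)) - X ^ q := by
  set L := reduction p (truncLog p) with hL
  set I : Ideal (ZMod p)[X] := Ideal.span {(X - 1) ^ (p - 1)} with hI
  have mk_eq {f g : (ZMod p)[X]} : (X - 1) ^ (p - 1) ∣ f - g ↔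
      Ideal.Quotient.mk I f = Ideal.Quotient.mk I g := by
    rw [Ideal.Quotient.eq, hI, Ideal.mem_span_singleton]
  have hz := mk_eq.1 (X_sub_one_pow_dvd_logQuot_pow_sub_one hmn)
  have hzU := mk_eq.1 (X_sub_one_pow_dvd_logQuot_mul_truncExpQuot_comp_sub_one (p := p))
  have hexp := mk_eq.1
    ((pow_dvd_pow (X - 1) (Nat.sub_le p 1)).trans (X_sub_one_pow_dvd_truncExp_comp_sub_X (p := p)))
  have hcomp : (X - 1) ^ (p - 1) ∣ (truncExpQuot p).comp L ^ m * (truncBernoulli p m q).comp L -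
      (truncExp p).comp L ^ q := by
    have h := map_dvd (compRingHom L)
      (X_pow_dvd_truncExpQuot_pow_mul_truncBernoulli_sub (p := p) m q)
    simp only [coe_compRingHom_apply, mul_comp, X_comp, sub_comp, pow_comp] at h
    refine Dvd.dvd.trans ?_ h
    rw [hL, reduction_truncLog, mul_pow]
    exact dvd_mul_right _ _
  rw [mk_eq] at hcomp ⊢
  simp only [map_mul, map_pow, map_one] at hz hzU hexp hcomp ⊢
  rw [hexp] at hcomp
  rw [← hcomp]
  set ζ := Ideal.Quotient.mk I (reduction p (logQuot p))
  set U := Ideal.Quotient.mk I ((truncExpQuot p).comp L)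
  set G := Ideal.Quotient.mk I ((truncBernoulli p m q).comp L)
  calc ζ ^ n * G = ζ ^ n * G * (ζ * U) ^ m := by rw [hzU, one_pow, mul_one]
    _ = ζ ^ (m + n) * (U ^ m * G) := by ring
    _ = U ^ m * G := by rw [hz, one_mul]

end TruncExp

section PrimeModulus

variable {p : ℕ}

lemma natCast_dvd_iff_reduction_eq_zero {f : ℤ[X]} : (p : ℤ[X]) ∣ f ↔ reduction p f = 0 := by
  rw [← RingHom.mem_ker, ker_mapRingHom, ZMod.ker_intCastRingHom, Ideal.map_span,
    Set.image_singleton, Ideal.mem_span_singleton, map_natCast]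

variable [hp : Fact p.Prime]

lemma exists_eq_mul_add_of_dvd_reduction {f g : ℤ[X]} (h : reduction p g ∣ reduction p f) :
    ∃ u v : ℤ[X], f = g * u + (p : ℤ[X]) * v := by
  obtain ⟨w, hw⟩ := h
  obtain ⟨u, rfl⟩ := Polynomial.map_surjective _ (ZMod.ringHom_surjective (Int.castRingHom _)) w
  obtain ⟨v, hv⟩ : (p : ℤ[X]) ∣ f - g * u := by
    rw [natCast_dvd_iff_reduction_eq_zero, map_sub, map_mul, hw, coe_mapRingHom, sub_self]
  exact ⟨u, v, eq_add_of_sub_eq' hv⟩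

lemma X_sub_one_pow_mul_mem_fleckIdeal_of_dvd_reduction {f : ℤ[X]}
    (h : (X - 1) ^ (p - 1) ∣ reduction p f) (n : ℕ) :
    (X - 1) ^ n * f ∈ fleckIdeal p (n + (p - 1)) := by
  obtain ⟨u, v, rfl⟩ := exists_eq_mul_add_of_dvd_reduction (p := p) (g := (X - 1) ^ (p - 1))
    (by simpa using h)
  rw [show (X - 1) ^ n * ((X - 1) ^ (p - 1) * u + (p : ℤ[X]) * v) =
    (p : ℤ[X]) ^ 0 * (X - 1) ^ (n + (p - 1)) * u + (p : ℤ[X]) ^ 1 * (X - 1) ^ n * v by ring]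
  exact add_mem (mul_mem_fleckIdeal (by omega) u) (mul_mem_fleckIdeal (by omega) v)

lemma X_pow_mul_X_sub_one_pow_sub_mem_fleckIdeal {m n q : ℕ} (hmn : p ∣ m + n) {P : ℤ[X]}
    (hP : reduction p P = truncBernoulli p m q) :
    X ^ q * (X - 1) ^ n - truncLog p ^ n * P.comp (truncLog p) ∈ fleckIdeal p (n + (p - 1)) := by
  rw [truncLog, mul_pow, mul_comm (X ^ q), mul_assoc, ← mul_sub, ← truncLog]
  apply X_sub_one_pow_mul_mem_fleckIdeal_of_dvd_reduction
  rw [map_sub, dvd_sub_comm]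
  have h := X_sub_one_pow_dvd_logQuot_pow_mul_truncBernoulli_comp_sub hmn q
  rw [← hP] at h
  simpa [map_comp] using h

lemma X_pow_sub_one_mul_mem_fleckIdeal (n j : ℕ) :
    (X ^ (p * j) - 1) * (X - 1) ^ n ∈ fleckIdeal p (n + (p - 1)) := by
  rw [mul_comm]
  refine X_sub_one_pow_mul_mem_fleckIdeal_of_dvd_reduction ?_ n
  have h : (X ^ p - 1 : (ZMod p)[X]) ∣ X ^ (p * j) - 1 := by
    rw [pow_mul]
    exact sub_one_dvd_pow_sub_one _ _
  rw [← one_pow p, ← sub_pow_char] at h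
  simpa using (pow_dvd_pow _ (Nat.sub_le p 1)).trans h

lemma residueSum_X_pow_mul_X_sub_one_pow_modEq {l n c : ℕ} (r : ℤ) {j q : ℕ}
    (hq : (q : ℤ) = p * j - r) (h : l * p + 1 + c * (p - 1) ≤ n) :
    residueSum p r l ((X - 1) ^ n) ≡ residueSum p 0 l (X ^ q * (X - 1) ^ n)
      [ZMOD (p : ℤ) ^ (c + 1)] := by
  have hmem := X_pow_sub_one_mul_mem_fleckIdeal (p := p) n j
  rw [sub_mul, one_mul] at hmem
  refine (residueSum_modEq_of_sub_mem hmem h r).symm.trans ?_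
  rw [residueSum_X_pow_mul, residueSum_X_pow_mul, hq]
  push_cast
  rw [zero_sub, neg_sub]

lemma residueSum_truncLog_pow_mul_comp_modEq {l n c : ℕ} (b : ℕ → ℤ)
    (h : l * p + 1 + c * (p - 1) ≤ n) :
    residueSum p 0 l (truncLog p ^ n * (∑ k ∈ range (p - 1), monomial k (b k)).comp (truncLog p)) ≡
      ∑ k ∈ range (p - 1), b k * leadingTerm p (n + k) l [ZMOD (p : ℤ) ^ (c + 1)] := by
  rw [Polynomial.sum_comp, Finset.mul_sum, map_sum]
  refine Int.ModEq.sum fun k _ => ?_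
  rw [monomial_comp, eq_intCast, mul_left_comm, ← pow_add, residueSum_intCast_mul]
  exact (residueSum_truncLog_pow_modEq_leadingTerm (by omega)).mul_left _

lemma residueSum_X_sub_one_pow_modEq_sum {l m n c : ℕ} (r : ℤ) (hmn : p ∣ m + n) {b : ℕ → ℤ}
    (hb : ∀ k, (b k : ZMod p) = PowerSeries.coeff k (bernoulliSeries m (-r : ZMod p)))
    (h : l * p + 1 + c * (p - 1) ≤ n) :
    residueSum p r l ((X - 1) ^ n) ≡ ∑ k ∈ range (p - 1), b k * leadingTerm p (n + k) l
      [ZMOD (p : ℤ) ^ (c + 1)] := by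
  have hr : 0 ≤ (p : ℤ) * r.natAbs - r := by
    have := Int.le_natAbs (a := r)
    nlinarith [hp.out.one_lt]
  obtain ⟨q, hq⟩ := Int.eq_ofNat_of_zero_le hr
  have hqr : (q : ZMod p) = -r := by
    simpa using congrArg (Int.cast : ℤ → ZMod p) hq.symm
  have hP : reduction p (∑ k ∈ range (p - 1), monomial k (b k)) = truncBernoulli p m q := by
    rw [hqr, truncBernoulli, PowerSeries.trunc_apply]
    simp [hb]
  exact (residueSum_X_pow_mul_X_sub_one_pow_modEq r hq.symm h).trans <|
    (residueSum_modEq_of_sub_mem (X_pow_mul_X_sub_one_pow_sub_mem_fleckIdeal hmn hP) h 0).trans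
      (residueSum_truncLog_pow_mul_comp_modEq b h)

lemma sum_mul_leadingTerm_eq {l n k N : ℕ} (b : ℕ → ℤ) (hln : l ≤ n) (hk : k < p - 1)
    (hN : n + k = l + (N + 1) * (p - 1)) :
    ∑ i ∈ range (p - 1), b i * leadingTerm p (n + i) l =
      b k * (N.choose l * (-(p : ℤ)) ^ (N - l)) := by
  rw [Finset.sum_eq_single_of_mem k (Finset.mem_range.2 hk),
    leadingTerm_of_eq hp.out.two_le hN]
  intro i hi hik
  rw [leadingTerm_of_not_dvd, mul_zero]
  intro hdvd
  have hmod : n - l + i ≡ n - l + k [MOD (p - 1)] := by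
    rw [← Nat.sub_add_comm hln, ← Nat.sub_add_comm hln, hN, Nat.add_sub_cancel_left]
    exact (Nat.modEq_zero_iff_dvd.2 hdvd).trans
      (Nat.modEq_zero_iff_dvd.2 (Nat.dvd_mul_left _ _)).symm
  exact hik (Nat.ModEq.eq_of_lt_of_lt (Nat.ModEq.add_left_cancel' _ hmod)
    (Finset.mem_range.1 hi) hk)

end PrimeModulus

section ResidueSection

/-- The linear map extracting the exponents congruent to `t` modulo `q`: it sends `X ^ (q * i + t)`
to `X ^ i` and the other powers of `X` to `0`. It reduces residue sums modulo `p * q` to residue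
sums modulo `p`. -/
noncomputable def residueSection (q t : ℕ) : ℤ[X] →ₗ[ℤ] ℤ[X] :=
  Polynomial.lsum fun k => if k % q = t then monomial (k / q) else 0

lemma residueSection_monomial (q t k : ℕ) (c : ℤ) :
    residueSection q t (monomial k c) = if k % q = t then monomial (k / q) c else 0 := by
  rw [residueSection, Polynomial.lsum_apply, Polynomial.sum_monomial_index]
  · split_ifs <;> simp
  · exact map_zero _

lemma residueSection_expand_mul {q : ℕ} (hq : 0 < q) (t : ℕ) (g f : ℤ[X]) :
    residueSection q t (expand ℤ q g * f) = g * residueSection q t f := by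
  induction g using Polynomial.induction_on' with
  | add g₁ g₂ h₁ h₂ => rw [map_add, add_mul, map_add, h₁, h₂, add_mul]
  | monomial i b =>
    induction f using Polynomial.induction_on' with
    | add f₁ f₂ h₁ h₂ => rw [mul_add, map_add, map_add, h₁, h₂, mul_add]
    | monomial k c =>
      rw [expand_monomial, monomial_mul_monomial, residueSection_monomial,
        residueSection_monomial, add_comm (i * q) k, Nat.add_mul_mod_self_right,
        Nat.add_mul_div_right _ _ hq]
      split_ifs
      · rw [monomial_mul_monomial, add_comm]
      · rw [mul_zero]

variable {q t : ℕ}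

lemma natCast_dvd_natCast_sub_iff (ht : t < q) (k : ℕ) : (q : ℤ) ∣ k - t ↔ k % q = t := by
  rw [← Nat.modEq_iff_dvd, Nat.ModEq, Nat.mod_eq_of_lt ht, eq_comm]

lemma residueWeight_mul_eq (p : ℕ) (ht : t < q) (r : ℤ) (l k : ℕ) :
    residueWeight (p * q) (q * r + t) l k =
      if k % q = t then residueWeight p r l (k / q) else 0 := by
  have hq : (0 : ℤ) < q := by omega
  by_cases hk : k % q = t
  · have hsub : (k : ℤ) - (q * r + t) = q * ((k / q : ℕ) - r) := by
      have hdiv : (q * (k / q : ℕ) + (k % q : ℕ) : ℤ) = k := mod_cast Nat.div_add_mod k q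
      rw [← hk]
      linear_combination -hdiv
    rw [if_pos hk, residueWeight, residueWeight, hsub, Nat.cast_mul, mul_comm (p : ℤ)]
    simp only [mul_dvd_mul_iff_left hq.ne', Int.mul_ediv_mul_of_pos _ _ hq]
  · rw [if_neg hk, residueWeight, if_neg]
    rw [← natCast_dvd_natCast_sub_iff ht] at hk
    contrapose! hk
    rw [← dvd_sub_left (dvd_mul_right (q : ℤ) r), sub_sub, add_comm (t : ℤ)]
    exact dvd_of_mul_left_dvd (by rwa [Nat.cast_mul] at hk)

lemma residueSum_mul_eq (p : ℕ) (ht : t < q) (r : ℤ) (l : ℕ) (f : ℤ[X]) :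
    residueSum (p * q) (q * r + t) l f = residueSum p r l (residueSection q t f) := by
  induction f using Polynomial.induction_on' with
  | add f₁ f₂ h₁ h₂ => rw [map_add, map_add, map_add, h₁, h₂]
  | monomial k c =>
    rw [residueSection_monomial, residueSum_monomial, residueWeight_mul_eq p ht]
    split_ifs
    · rw [residueSum_monomial]
    · rw [zero_mul, map_zero]

lemma eval_one_residueSection (ht : t < q) (f : ℤ[X]) :
    (residueSection q t f).eval 1 = residueSum q t 0 f := by
  induction f using Polynomial.induction_on' with
  | add f₁ f₂ h₁ h₂ => rw [map_add, map_add, eval_add, h₁, h₂]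
  | monomial k c =>
    rw [residueSection_monomial, residueSum_monomial, residueWeight, Ring.choose_zero_right]
    simp only [natCast_dvd_natCast_sub_iff ht]
    split_ifs <;> simp

lemma residueSection_of_natDegree_lt (ht : t < q) {f : ℤ[X]} (hf : f.natDegree < q) :
    residueSection q t f = (f.coeff t : ℤ[X]) := by
  conv_lhs => rw [f.as_sum_range' q hf]
  rw [map_sum, Finset.sum_eq_single_of_mem t (Finset.mem_range.2 ht)]
  · rw [residueSection_monomial, Nat.mod_eq_of_lt ht, if_pos rfl, Nat.div_eq_of_lt ht,
      monomial_zero_left, eq_intCast]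
  · intro k hk hkt
    rw [residueSection_monomial, Nat.mod_eq_of_lt (Finset.mem_range.1 hk), if_neg hkt]

lemma natDegree_X_sub_one_pow (M : ℕ) : ((X - 1 : ℤ[X]) ^ M).natDegree = M := by
  rw [← C_1, natDegree_pow, natDegree_X_sub_C, mul_one]

lemma coeff_X_sub_one_pow (M k : ℕ) :
    ((X - 1 : ℤ[X]) ^ M).coeff k = (-1) ^ (M - k) * M.choose k := by
  rw [← coeff_X_add_C_pow, C_neg, C_1, sub_eq_add_neg]

lemma residueSection_X_sub_one_pow {s : ℕ} (hs : s < q) (ht : t < q) :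
    residueSection q t ((X - 1) ^ s) = (((-1) ^ (s - t) * s.choose t : ℤ) : ℤ[X]) := by
  rw [residueSection_of_natDegree_lt ht]
  · rw [coeff_X_sub_one_pow]
  · rwa [natDegree_X_sub_one_pow]

end ResidueSection

section Reflection

variable {q M : ℕ}

lemma residueSum_zero_reflect {f : ℤ[X]} {r r' : ℤ} (h : r + r' ≡ M [ZMOD q])
    (hf : f.natDegree ≤ M) : residueSum q r 0 (reflect M f) = residueSum q r' 0 f := by
  refine Polynomial.induction_with_natDegree_le
    (fun f => residueSum q r 0 (reflect M f) = residueSum q r' 0 f) M (by simp)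
    (fun k c _ hk => ?_)
    (fun f g _ _ ihf ihg => by rw [reflect_add, map_add, map_add, ihf, ihg]) f hf
  have hweight : residueWeight q r 0 (M - k) = residueWeight q r' 0 k := by
    have hsub : (M : ℤ) - k - r = (M - (r + r')) - (k - r') := by ring
    simp only [residueWeight, Ring.choose_zero_right, Nat.cast_sub hk, hsub, dvd_sub_right h.dvd]
  rw [reflect_C_mul_X_pow, revAt_le hk, C_mul_X_pow_eq_monomial, C_mul_X_pow_eq_monomial,
    residueSum_monomial, residueSum_monomial, hweight]

lemma reflect_X_sub_one_pow (M : ℕ) : reflect M ((X - 1 : ℤ[X]) ^ M) = (1 - X) ^ M := by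
  induction M with
  | zero => simp
  | succ M ih =>
    rw [pow_succ, reflect_mul _ _ (natDegree_X_sub_one_pow M).le
      (by simpa using (natDegree_X_sub_one_pow 1).le), ih, reflect_sub, reflect_one_X, reflect_one,
      pow_one, pow_succ]

lemma residueSum_X_sub_one_pow_eq_zero {t : ℤ} (hM : Odd M) (h : t + t ≡ M [ZMOD q]) :
    residueSum q t 0 ((X - 1) ^ M) = 0 := by
  have hreflect := residueSum_zero_reflect h (natDegree_X_sub_one_pow M).le
  rw [reflect_X_sub_one_pow, ← neg_sub, hM.neg_pow, map_neg] at hreflect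
  linarith

end Reflection

section ResidueSectionOfPow

variable {p q n : ℕ} {V f : ℤ[X]}

lemma sub_add_mul_sub_one {j : ℕ} (hj : j ≤ n) (hp : 2 ≤ p) :
    n - j + j * (p - 1) = n + j * (p - 2) := by
  obtain ⟨d, rfl⟩ := Nat.exists_eq_add_of_le' hp
  rw [Nat.add_sub_cancel, show d + 2 - 1 = d + 1 by omega, mul_add_one]
  omega

lemma residueSection_expand_add_mul_pow_mul (p : ℕ) (hq : 0 < q) (t n : ℕ) (V f : ℤ[X]) :
    residueSection q t ((expand ℤ q (X - 1) + (p : ℤ[X]) * V) ^ n * f) =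
      ∑ j ∈ range (n + 1), (p : ℤ[X]) ^ j * (X - 1) ^ (n - j) *
        ((n.choose j : ℤ[X]) * residueSection q t (V ^ j * f)) := by
  rw [add_comm, add_pow, Finset.sum_mul, map_sum]
  refine Finset.sum_congr rfl fun j _ => ?_
  have hterm : ((p : ℤ[X]) * V) ^ j * expand ℤ q (X - 1) ^ (n - j) * (n.choose j : ℤ[X]) * f =
      expand ℤ q ((p : ℤ[X]) ^ j * (X - 1) ^ (n - j) * (n.choose j : ℤ[X])) * (V ^ j * f) := by
    simp only [map_mul, map_pow, map_natCast]
    ring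
  rw [hterm, residueSection_expand_mul hq, mul_assoc _ (n.choose j : ℤ[X])]

lemma residueSection_expand_add_mul_pow_mul_sub_eq_sum (p : ℕ) (hq : 0 < q) (t n : ℕ)
    (V f : ℤ[X]) :
    residueSection q t ((expand ℤ q (X - 1) + (p : ℤ[X]) * V) ^ n * f) -
        (X - 1) ^ n * residueSection q t f =
      ∑ j ∈ range n, (p : ℤ[X]) ^ (j + 1) * (X - 1) ^ (n - (j + 1)) *
        ((n.choose (j + 1) : ℤ[X]) * residueSection q t (V ^ (j + 1) * f)) := by
  rw [residueSection_expand_add_mul_pow_mul p hq, Finset.sum_range_succ']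
  simp

variable [hp : Fact p.Prime]

lemma mul_mem_fleckIdeal_of_dvd_eval_one {i e k : ℕ} (hf : (p : ℤ) ∣ f.eval 1)
    (h : k ≤ i + e * (p - 1) + 1) : (p : ℤ[X]) ^ e * (X - 1) ^ i * f ∈ fleckIdeal p k := by
  obtain ⟨a, ha⟩ := X_sub_C_dvd_sub_C_eval (a := 1) (p := f)
  obtain ⟨b, hb⟩ := hf
  have hf' : f = (X - 1) * a + (p : ℤ[X]) * (b : ℤ[X]) := by
    rw [hb] at ha
    simpa using eq_add_of_sub_eq ha
  have hsplit : (p : ℤ[X]) ^ e * (X - 1) ^ i * f =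
      (p : ℤ[X]) ^ e * (X - 1) ^ (i + 1) * a + (p : ℤ[X]) ^ (e + 1) * (X - 1) ^ i * (b : ℤ[X]) := by
    rw [hf']
    ring
  have := hp.out.two_le
  rw [hsplit]
  exact add_mem (mul_mem_fleckIdeal (by omega) a)
    (mul_mem_fleckIdeal (by rw [add_mul, one_mul]; omega) (b : ℤ[X]))

lemma residueSection_pow_mul_sub_mem_fleckIdeal (hq : 0 < q) (t n : ℕ) (V f : ℤ[X]) :
    residueSection q t ((expand ℤ q (X - 1) + (p : ℤ[X]) * V) ^ n * f) -
      (X - 1) ^ n * residueSection q t f ∈ fleckIdeal p (n + (p - 2)) := by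
  rw [residueSection_expand_add_mul_pow_mul_sub_eq_sum p hq]
  refine sum_mem fun j hj => mul_mem_fleckIdeal ?_ _
  rw [sub_add_mul_sub_one (Finset.mem_range.1 hj) hp.out.two_le]
  exact Nat.add_le_add_left (Nat.le_mul_of_pos_left _ j.succ_pos) n

lemma residueSection_pow_mul_sub_mem_fleckIdeal_of_dvd {t : ℕ} (ht : t < q)
    (h₁ : (p : ℤ) ∣ n * residueSum q t 0 (V * f))
    (h₂ : p = 2 → ∀ g, (p : ℤ) ∣ residueSum q t 0 (V ^ 2 * g)) :
    residueSection q t ((expand ℤ q (X - 1) + (p : ℤ[X]) * V) ^ n * f) -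
      (X - 1) ^ n * residueSection q t f ∈ fleckIdeal p (n + (p - 1)) := by
  have hp2 := hp.out.two_le
  rw [residueSection_expand_add_mul_pow_mul_sub_eq_sum p (by omega)]
  refine sum_mem fun j hj => ?_
  have hjn := Finset.mem_range.1 hj
  have heval : ((n.choose (j + 1) : ℤ[X]) * residueSection q t (V ^ (j + 1) * f)).eval 1 =
      n.choose (j + 1) * residueSum q t 0 (V ^ (j + 1) * f) := by
    rw [eval_mul, eval_natCast, eval_one_residueSection ht]
  rcases j with _ | j
  · refine mul_mem_fleckIdeal_of_dvd_eval_one ?_ (by omega)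
    rw [heval]
    simpa only [zero_add, pow_one, Nat.choose_one_right] using h₁
  · obtain rfl | hp3 := hp2.eq_or_lt
    · refine mul_mem_fleckIdeal_of_dvd_eval_one ?_ (by omega)
      rw [heval, add_assoc, add_comm j, pow_add, mul_assoc]
      exact (h₂ rfl _).mul_left _
    · refine mul_mem_fleckIdeal ?_ _
      rw [sub_add_mul_sub_one (j := j + 1 + 1) hjn hp2]
      have : 2 * (p - 2) ≤ (j + 1 + 1) * (p - 2) := Nat.mul_le_mul_right _ (by omega)
      omega

end ResidueSectionOfPow

section PrimePowerModulus

variable {p : ℕ}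

lemma dvd_residueSum_of_natCast_dvd_sub {q t : ℕ} {f g : ℤ[X]} (h : (p : ℤ[X]) ∣ f - g)
    (hg : (p : ℤ) ∣ residueSum q t 0 g) : (p : ℤ) ∣ residueSum q t 0 f := by
  obtain ⟨u, hu⟩ := h
  rw [eq_add_of_sub_eq hu, map_add, residueSum_natCast_mul]
  exact dvd_add (dvd_mul_right _ _) hg

variable [hp : Fact p.Prime]

lemma natCast_dvd_X_sub_one_pow_sub_expand (e : ℕ) :
    (p : ℤ[X]) ∣ (X - 1) ^ p ^ e - expand ℤ (p ^ e) (X - 1) := by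
  rw [natCast_dvd_iff_reduction_eq_zero]
  simp [sub_pow_char_pow]

lemma exists_X_sub_one_pow_eq_expand_add (p : ℕ) [Fact p.Prime] (e : ℕ) : ∃ V : ℤ[X],
    (X - 1) ^ (p * p ^ e) = expand ℤ (p * p ^ e) (X - 1) + (p : ℤ[X]) * V ∧
      (p : ℤ[X]) ∣ V + expand ℤ (p ^ e) (truncLog p) := by
  obtain ⟨h, hh⟩ := dvd_sub_pow_of_dvd_sub (natCast_dvd_X_sub_one_pow_sub_expand (p := p) e) 1
  have hexpand := congrArg (expand ℤ (p ^ e)) (X_pow_sub_one_eq (p := p))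
  refine ⟨(p : ℤ[X]) * h - expand ℤ (p ^ e) (truncLog p), ?_, h, by ring⟩
  rw [mul_comm p, pow_mul]
  simp only [map_sub, map_add, map_mul, map_pow, map_one, map_natCast, expand_X, pow_one,
    pow_mul] at hexpand hh ⊢
  linear_combination hh - hexpand

lemma dvd_residueSum_truncLog_mul {s t : ℕ} (h : (p ≠ 2 ∧ s = 2 * t) ∨ s = p - 1) :
    (p : ℤ) ∣ residueSum p t 0 (truncLog p * (X - 1) ^ s) := by
  rcases h with ⟨hp2, rfl⟩ | rfl
  · have hsplit : (p : ℤ[X]) * (truncLog p * (X - 1) ^ (2 * t)) =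
        (X ^ p - 1) * (X - 1) ^ (2 * t) - (X - 1) ^ (p + 2 * t) := by
      rw [X_pow_sub_one_eq]
      ring
    have hsum := congrArg (residueSum p t 0) hsplit
    rw [residueSum_natCast_mul, map_sub, residueSum_zero_mul, residueSum_X_sub_one_pow_eq_zero
      ((hp.out.odd_of_ne_two hp2).add_even (even_two_mul t)), sub_zero] at hsum
    · rw [(mul_eq_zero.1 hsum).resolve_left (mod_cast hp.out.ne_zero)]
      exact dvd_zero _
    · rw [← two_mul, Int.modEq_iff_dvd]
      simp
  · rw [truncLog, mul_right_comm, mul_pow_sub_one hp.out.ne_zero]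
    exact dvd_residueSum_X_sub_one_pow_mul _ _

lemma dvd_residueSum_expand_truncLog_mul {e s t : ℕ}
    (h : (p ≠ 2 ∧ s / p ^ e = 2 * (t / p ^ e)) ∨ s / p ^ e = p - 1) :
    (p : ℤ) ∣ residueSum (p * p ^ e) t 0 (expand ℤ (p ^ e) (truncLog p) * (X - 1) ^ s) := by
  have hQ : 0 < p ^ e := pow_pos hp.out.pos e
  have hpow : (p : ℤ[X]) ∣ expand ℤ (p ^ e) (truncLog p) * (X - 1) ^ s -
      expand ℤ (p ^ e) (truncLog p * (X - 1) ^ (s / p ^ e)) * (X - 1) ^ (s % p ^ e) := by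
    nth_rw 1 [← Nat.div_add_mod s (p ^ e)]
    rw [pow_add, pow_mul, map_mul, map_pow, ← mul_assoc, ← sub_mul, ← mul_sub]
    exact (((natCast_dvd_X_sub_one_pow_sub_expand e).trans
      (sub_dvd_pow_sub_pow _ _ _)).mul_left _).mul_right _
  refine dvd_residueSum_of_natCast_dvd_sub hpow ?_
  have htt : ((p ^ e : ℕ) : ℤ) * (t / p ^ e : ℕ) + (t % p ^ e : ℕ) = t := by
    exact_mod_cast Nat.div_add_mod t (p ^ e)
  rw [← htt, residueSum_mul_eq p (Nat.mod_lt _ hQ), residueSection_expand_mul hQ,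
    residueSection_X_sub_one_pow (Nat.mod_lt _ hQ) (Nat.mod_lt _ hQ), mul_comm,
    residueSum_intCast_mul]
  exact (dvd_residueSum_truncLog_mul h).mul_left _

lemma two_dvd_residueSum_sq_mul {Q t : ℕ} {V : ℤ[X]}
    (hV : (2 : ℤ[X]) ∣ V + expand ℤ Q (truncLog 2)) (g : ℤ[X]) :
    (2 : ℤ) ∣ residueSum (2 * Q) t 0 (V ^ 2 * g) := by
  have hlog : truncLog 2 = X - 1 := by
    simp [truncLog, logQuot, show Ioo 0 2 = {1} from rfl]
  obtain ⟨h, hh⟩ := hV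
  refine dvd_residueSum_of_natCast_dvd_sub (p := 2) (g := (X ^ (2 * Q) - 1) * g) ?_ (by
    rw [residueSum_zero_mul]; exact dvd_zero _)
  rw [hlog] at hh
  simp only [map_sub, map_one, expand_X] at hh
  refine ⟨(2 * h ^ 2 - 2 * h * (X ^ Q - 1) - (X ^ Q - 1)) * g, ?_⟩
  rw [eq_sub_of_add_eq hh, pow_mul']
  push_cast
  ring

lemma residueSection_X_sub_one_pow_sub_mem_fleckIdeal {e s t : ℕ} (n : ℕ)
    (hs : s < p * p ^ e) (ht : t < p * p ^ e) :
    residueSection (p * p ^ e) t ((X - 1) ^ (p * p ^ e * n + s)) -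
      (((-1) ^ (s - t) * s.choose t : ℤ) : ℤ[X]) * (X - 1) ^ n ∈ fleckIdeal p (n + (p - 2)) := by
  obtain ⟨V, hV, -⟩ := exists_X_sub_one_pow_eq_expand_add p e
  rw [pow_add, pow_mul, hV, ← residueSection_X_sub_one_pow hs ht, mul_comm (residueSection _ _ _)]
  exact residueSection_pow_mul_sub_mem_fleckIdeal (by omega) t n V _

lemma residueSection_X_sub_one_pow_sub_mem_fleckIdeal_of_dvd {e n s t : ℕ}
    (hs : s < p * p ^ e) (ht : t < p * p ^ e)
    (h : p ∣ n ∨ (p ≠ 2 ∧ s / p ^ e = 2 * (t / p ^ e)) ∨ s / p ^ e = p - 1) :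
    residueSection (p * p ^ e) t ((X - 1) ^ (p * p ^ e * n + s)) -
      (((-1) ^ (s - t) * s.choose t : ℤ) : ℤ[X]) * (X - 1) ^ n ∈ fleckIdeal p (n + (p - 1)) := by
  obtain ⟨V, hV, hlog⟩ := exists_X_sub_one_pow_eq_expand_add p e
  rw [pow_add, pow_mul, hV, ← residueSection_X_sub_one_pow hs ht, mul_comm (residueSection _ _ _)]
  refine residueSection_pow_mul_sub_mem_fleckIdeal_of_dvd ht ?_ ?_
  · rcases h with h | h
    · exact (Int.natCast_dvd_natCast.2 h).mul_right _
    · refine Dvd.dvd.mul_left (dvd_residueSum_of_natCast_dvd_sub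
        (g := -(expand ℤ (p ^ e) (truncLog p) * (X - 1) ^ s)) ?_ ?_) _
      · rw [sub_neg_eq_add, ← add_mul]
        exact hlog.mul_right _
      · rw [map_neg, dvd_neg]
        exact dvd_residueSum_expand_truncLog_mul h
  · rintro rfl
    exact two_dvd_residueSum_sq_mul (mod_cast hlog)

lemma sub_one_dvd_of_eq {l n c : ℕ} (h : n = l * p + 1 + c * (p - 1)) :
    (p : ℤ) - 1 ∣ n - l - 1 := by
  refine ⟨l + c, ?_⟩
  rw [h]
  push_cast [Nat.cast_pred hp.out.pos]
  ring

lemma residueSum_prime_pow_modEq {a l n s t c : ℕ} (r : ℤ) (ha : 1 ≤ a)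
    (hs : s < p ^ (a - 1)) (ht : t < p ^ (a - 1)) (hc : l * p + 1 + c * (p - 1) ≤ n)
    (h : a = 1 ∨ p ∣ n ∨ ¬ ((p : ℤ) - 1) ∣ (n : ℤ) - l - 1 ∨
      (p ≠ 2 ∧ s / p ^ (a - 2) = 2 * (t / p ^ (a - 2))) ∨ s / p ^ (a - 2) = p - 1) :
    residueSum (p ^ a) ((p : ℤ) ^ (a - 1) * r + t) l ((X - 1) ^ (p ^ (a - 1) * n + s)) ≡
      (-1) ^ (s - t) * s.choose t * residueSum p r l ((X - 1) ^ n) [ZMOD (p : ℤ) ^ (c + 1)] := by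
  rw [← mul_pow_sub_one (Nat.ne_of_gt ha) p, ← Nat.cast_pow p (a - 1), residueSum_mul_eq p ht,
    ← residueSum_intCast_mul]
  obtain rfl | ⟨e, rfl⟩ : a = 1 ∨ ∃ e, a = e + 2 := by
    rcases ha.eq_or_lt with h1 | h2
    · exact .inl h1.symm
    · exact .inr (Nat.exists_eq_add_of_le' h2)
  · rw [Nat.sub_self, pow_zero] at hs ht ⊢
    rw [← residueSection_X_sub_one_pow hs ht, mul_comm (residueSection 1 t _),
      ← residueSection_expand_mul one_pos, expand_one, ← pow_add, one_mul]
  · rw [show e + 2 - 1 = e + 1 by omega, pow_succ' p e] at hs ht ⊢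
    rw [Nat.add_sub_cancel] at h
    rcases hc.eq_or_lt with heq | hlt
    · refine residueSum_modEq_of_sub_mem
        (residueSection_X_sub_one_pow_sub_mem_fleckIdeal_of_dvd hs ht ?_) hc r
      have := sub_one_dvd_of_eq heq.symm
      have : e + 2 ≠ 1 := by omega
      tauto
    · have hp2 := hp.out.two_le
      refine residueSum_modEq_of_sub_mem (n := n - 1) ?_ (by omega) r
      rw [show n - 1 + (p - 1) = n + (p - 2) by omega]
      exact residueSection_X_sub_one_pow_sub_mem_fleckIdeal n hs ht

end PrimePowerModulus

section Fpa

lemma intBinom_eq_choose (x : ℤ) (l : ℕ) : intBinom x l = (Ring.choose x l : ℤ) := by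
  have h := Ring.descPochhammer_eq_factorial_smul_choose x l
  rw [← eval_eq_smeval, descPochhammer_eval_eq_prod_range, nsmul_eq_mul] at h
  rw [intBinom, div_eq_iff (by positivity), mul_comm]
  exact_mod_cast h

lemma residueSum_X_sub_one_pow (q : ℕ) (r : ℤ) (l M : ℕ) : residueSum q r l ((X - 1) ^ M) =
    ∑ k ∈ range (M + 1), residueWeight q r l k * ((-1) ^ (M - k) * M.choose k) := by
  have hdeg := natDegree_X_sub_one_pow M
  rw [((X - 1 : ℤ[X]) ^ M).as_sum_range' (M + 1) (by omega), map_sum]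
  exact Finset.sum_congr rfl fun k _ => by rw [residueSum_monomial, coeff_X_sub_one_pow]

lemma Fpa_eq (p a l n : ℕ) (r : ℤ) : Fpa p a l n r =
    (-(p : ℚ)) ^ (-(Int.fdiv (n - l * (p : ℤ) ^ a - (p : ℤ) ^ (a - 1)) (Nat.totient (p ^ a)))) *
      (((-1) ^ n * residueSum (p ^ a) r l ((X - 1) ^ n) : ℤ) : ℚ) := by
  rw [Fpa]
  congr 1
  rw [residueSum_X_sub_one_pow, Finset.mul_sum, Int.cast_sum]
  refine Finset.sum_congr rfl fun k hk => ?_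
  have hpow : (-1 : ℚ) ^ k = (-1) ^ n * (-1) ^ (n - k) := by
    obtain ⟨j, rfl⟩ := Nat.exists_eq_add_of_le (Finset.mem_range_succ_iff.1 hk)
    rw [Nat.add_sub_cancel_left, pow_add, mul_assoc, ← mul_pow]
    simp
  simp only [residueWeight, Nat.cast_pow, ← Int.dvd_iff_emod_eq_zero]
  split_ifs
  · rw [intBinom_eq_choose, hpow]
    push_cast
    ring
  · simp

variable {p : ℕ} [hp : Fact p.Prime]

lemma fdiv_totient_eq {a s : ℕ} (ha : 1 ≤ a) (l n : ℕ) (hs : s < p ^ (a - 1)) :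
    Int.fdiv ((p ^ (a - 1) * n + s : ℕ) - l * (p : ℤ) ^ a - (p : ℤ) ^ (a - 1))
      (Nat.totient (p ^ a)) = ((n : ℤ) - l * p - 1) / ((p : ℤ) - 1) := by
  obtain ⟨e, rfl⟩ := Nat.exists_eq_add_of_le' ha
  rw [Nat.add_sub_cancel] at hs ⊢
  have hq : (0 : ℤ) < (p : ℤ) ^ e := pow_pos (mod_cast hp.out.pos) e
  have hnum : ((p ^ e * n + s : ℕ) : ℤ) - l * (p : ℤ) ^ (e + 1) - (p : ℤ) ^ e =
      s + (p : ℤ) ^ e * (n - l * p - 1) := by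
    push_cast
    ring
  rw [Int.fdiv_eq_ediv_of_nonneg _ (Nat.cast_nonneg _), Nat.totient_prime_pow_succ hp.out,
    Nat.cast_mul, Nat.cast_pow, Nat.cast_pred hp.out.pos, ← Int.ediv_ediv_of_nonneg hq.le, hnum,
    Int.add_mul_ediv_left _ _ hq.ne',
    Int.ediv_eq_zero_of_lt (a := (s : ℤ)) (Nat.cast_nonneg _) (mod_cast hs), zero_add]

lemma Fpa_prime_pow_eq {a s : ℕ} (ha : 1 ≤ a) (l n : ℕ) (hs : s < p ^ (a - 1)) (r : ℤ) :
    Fpa p a l (p ^ (a - 1) * n + s) r =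
      (-(p : ℚ)) ^ (-(((n : ℤ) - l * p - 1) / ((p : ℤ) - 1))) *
        (((-1) ^ (p ^ (a - 1) * n + s) *
          residueSum (p ^ a) r l ((X - 1) ^ (p ^ (a - 1) * n + s)) : ℤ) : ℚ) := by
  rw [Fpa_eq, fdiv_totient_eq ha l n hs]

lemma reducesTo_Fpa_zero {a l n s : ℕ} (r : ℤ) (ha : 1 ≤ a) (hs : s < p ^ (a - 1))
    (hln : n ≤ l * p) : ReducesTo p (Fpa p a l (p ^ (a - 1) * n + s) r) 0 := by
  have hfloor : ((n : ℤ) - l * p - 1) / ((p : ℤ) - 1) < 0 := by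
    refine Int.ediv_neg_of_neg_of_pos ?_ (sub_pos.2 (mod_cast hp.out.one_lt))
    have : (n : ℤ) ≤ l * p := mod_cast hln
    omega
  obtain ⟨d, hd⟩ := Int.eq_ofNat_of_zero_le
    (show 0 ≤ -(((n : ℤ) - l * p - 1) / ((p : ℤ) - 1)) - 1 by omega)
  rw [Fpa_prime_pow_eq ha l n hs, eq_add_of_sub_eq hd, ← Nat.cast_succ, zpow_natCast]
  have hpow : ReducesTo p ((-(p : ℚ)) ^ d.succ) 0 := by
    simpa using ReducesTo.intCast (p := p) ((-p) ^ d.succ)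
  simpa only [zero_mul] using hpow.mul (ReducesTo.intCast _)

lemma reducesTo_neg_prime_zpow_mul {S y : ℤ} {c : ℕ}
    (h : S ≡ y * (-(p : ℤ)) ^ c [ZMOD (p : ℤ) ^ (c + 1)]) :
    ReducesTo p ((-(p : ℚ)) ^ (-(c : ℤ)) * S) y := by
  obtain ⟨u, hu⟩ := h.symm.dvd
  have hS : S = (-(p : ℤ)) ^ c * (y + p * ((-1) ^ c * u)) := by
    have hsign : (-(p : ℤ)) ^ c * (-1) ^ c = (p : ℤ) ^ c := by rw [← mul_pow, neg_mul_neg, mul_one]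
    linear_combination hu - p * u * hsign
  have hp0 : (-(p : ℚ)) ^ c ≠ 0 := pow_ne_zero _ (neg_ne_zero.2 (mod_cast hp.out.ne_zero))
  have hred := ReducesTo.intCast (p := p) (y + p * ((-1) ^ c * u))
  rw [hS, zpow_neg, zpow_natCast, Int.cast_mul, Int.cast_pow, Int.cast_neg, Int.cast_natCast,
    inv_mul_cancel_left₀ hp0]
  simpa using hred

end Fpa

section WanExponent

variable {p l n c j k : ℕ}

lemma nLow_mul_add (x : ℕ) (hj : 1 ≤ j) (hjk : j + k + 1 = p) : nLow p (x * (p - 1) + j) = j := by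
  have hsub : ((x * (p - 1) + j : ℕ) : ℤ) - 1 = (j - 1 : ℤ) + x * ((p : ℤ) - 1) := by
    push_cast [Nat.cast_pred (show 0 < p by omega)]
    ring
  rw [nLow, hsub, Int.add_mul_emod_self_right, Int.emod_eq_of_lt (by omega) (by omega)]
  omega

lemma nUp_mul_add (x : ℕ) (hj : 1 ≤ j) (hjk : j + k + 1 = p) : nUp p (x * (p - 1) + j) = k := by
  have hneg : -((x * (p - 1) + j : ℕ) : ℤ) = k + (-x - 1 : ℤ) * ((p : ℤ) - 1) := by
    push_cast [Nat.cast_pred (show 0 < p by omega), ← hjk]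
    ring
  rw [nUp, hneg, Int.add_mul_emod_self_right, Int.emod_eq_of_lt (by omega) (by omega)]
  omega

lemma mul_add_sub_one_div (x : ℕ) (hj : 1 ≤ j) (hjk : j + k + 1 = p) :
    (x * (p - 1) + j - 1) / (p - 1) = x := by
  rw [Nat.add_sub_assoc hj, add_comm, Nat.add_mul_div_right _ _ (by omega),
    Nat.div_eq_of_lt (by omega), zero_add]

lemma ediv_eq_of_eq_add_mul_add (hj : 1 ≤ j) (hjk : j + k + 1 = p)
    (hn : n = l + (l + c) * (p - 1) + j) : ((n : ℤ) - l * p - 1) / ((p : ℤ) - 1) = c := by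
  have hsub : (n : ℤ) - l * p - 1 = (j - 1 : ℤ) + c * ((p : ℤ) - 1) := by
    rw [hn]
    push_cast [Nat.cast_pred (show 0 < p by omega)]
    ring
  rw [hsub, Int.add_mul_ediv_right _ _ (by omega), Int.ediv_eq_zero_of_lt (by omega) (by omega),
    zero_add]

variable [hp : Fact p.Prime]

lemma exists_eq_add_mul_add_of_mul_lt (h : l * p < n) :
    ∃ c j k, 1 ≤ j ∧ j + k + 1 = p ∧ n = l + (l + c) * (p - 1) + j := by
  have hp2 := hp.out.two_le
  have hmod := Nat.mod_lt (n - l * p - 1) (Nat.sub_pos_of_lt hp.out.one_lt)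
  have hdiv := Nat.div_add_mod' (n - l * p - 1) (p - 1)
  have hlp : l * p = l + l * (p - 1) := by
    rw [Nat.mul_sub_one, Nat.add_sub_cancel' (Nat.le_mul_of_pos_right l hp.out.pos)]
  refine ⟨(n - l * p - 1) / (p - 1), (n - l * p - 1) % (p - 1) + 1,
    p - 2 - (n - l * p - 1) % (p - 1), by omega, by omega, ?_⟩
  rw [add_mul]
  omega

lemma factorial_mul_factorial_eq_neg_one_pow (hjk : j + k + 1 = p) :
    (j.factorial : ZMod p) * k.factorial = (-1) ^ (j + 1) := by
  induction j generalizing k with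
  | zero =>
    obtain rfl : k = p - 1 := by omega
    simp [ZMod.wilsons_lemma]
  | succ j ih =>
    have hfact := ih (k := k + 1) (by omega)
    have hzero : ((j + k + 1 + 1 : ℕ) : ZMod p) = 0 := by
      rw [show j + k + 1 + 1 = p by omega, ZMod.natCast_self]
    rw [Nat.factorial_succ] at hfact ⊢
    push_cast at hfact hzero ⊢
    rw [pow_succ, ← hfact]
    linear_combination (j.factorial * k.factorial : ZMod p) * hzero

lemma neg_one_pow_eq_factorial_mul_factorial {e s t x : ℕ} (hjk : j + k + 1 = p)
    (hn : n = l + x * (p - 1) + j) (hts : t ≤ s) :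
    (-1 : ZMod p) ^ (l + t + 1 + (p ^ e * n + s) + (s - t)) = j.factorial * k.factorial := by
  rw [factorial_mul_factorial_eq_neg_one_pow hjk]
  rcases hp.out.eq_two_or_odd' with rfl | hodd
  · rw [show (-1 : ZMod 2) = 1 from rfl, one_pow, one_pow]
  · apply neg_one_pow_congr
    have heven : Even (p - 1) := Nat.Odd.sub_odd hodd odd_one
    have hpow := Nat.not_even_iff_odd.2 (hodd.pow (n := e))
    obtain ⟨d, rfl⟩ := Nat.exists_eq_add_of_le hts
    rw [Nat.add_sub_cancel_left, hn]
    simp only [Nat.even_add, Nat.even_mul, heven, hpow]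
    tauto

end WanExponent

section FleckBernoulli

variable {p : ℕ} [hp : Fact p.Prime] {a l n s t c j k : ℕ}

lemma residueSum_prime_pow_modEq_bernoulli {m : ℕ} (r : ℤ) (ha : 1 ≤ a)
    (hs : s < p ^ (a - 1)) (ht : t < p ^ (a - 1)) (hmn : p ∣ m + n)
    (hjk : j + k + 1 = p) (hj : 1 ≤ j) (hn : n = l + (l + c) * (p - 1) + j) {b : ℕ → ℤ}
    (hb : ∀ i, (b i : ZMod p) = PowerSeries.coeff i (bernoulliSeries m (-r : ZMod p)))
    (h : a = 1 ∨ p ∣ n ∨ ¬ ((p : ℤ) - 1) ∣ (n : ℤ) - l - 1 ∨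
      (p ≠ 2 ∧ s / p ^ (a - 2) = 2 * (t / p ^ (a - 2))) ∨ s / p ^ (a - 2) = p - 1) :
    residueSum (p ^ a) ((p : ℤ) ^ (a - 1) * r + t) l ((X - 1) ^ (p ^ (a - 1) * n + s)) ≡
      (-1) ^ (s - t) * s.choose t * (b k * (l + c).choose l) * (-(p : ℤ)) ^ c
        [ZMOD (p : ℤ) ^ (c + 1)] := by
  have hc : l * p + 1 + c * (p - 1) ≤ n := by
    have := Nat.le_mul_of_pos_right l hp.out.pos
    rw [hn, add_mul, Nat.mul_sub_one l p]
    omega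
  have hN : n + k = l + (l + c + 1) * (p - 1) := by
    rw [add_mul _ 1]
    omega
  have hsum := residueSum_X_sub_one_pow_modEq_sum r hmn hb hc
  rw [sum_mul_leadingTerm_eq b (by omega) (by omega) hN, Nat.add_sub_cancel_left,
    ← mul_assoc] at hsum
  rw [mul_assoc _ _ ((-(p : ℤ)) ^ c)]
  exact (residueSum_prime_pow_modEq r ha hs ht hc h).trans (hsum.mul_left _)

lemma reducesTo_Fpa {m : ℕ} (r : ℤ) (ha : 1 ≤ a)
    (hs : s < p ^ (a - 1)) (ht : t < p ^ (a - 1)) (hmn : p ∣ m + n)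
    (hjk : j + k + 1 = p) (hj : 1 ≤ j) (hn : n = l + (l + c) * (p - 1) + j)
    (h : a = 1 ∨ p ∣ n ∨ ¬ ((p : ℤ) - 1) ∣ (n : ℤ) - l - 1 ∨
      (p ≠ 2 ∧ s / p ^ (a - 2) = 2 * (t / p ^ (a - 2))) ∨ s / p ^ (a - 2) = p - 1) :
    ReducesTo p ((-1) ^ (l + t + 1) *
        Fpa p a l (p ^ (a - 1) * n + s) ((p : ℤ) ^ (a - 1) * r + t))
      (s.choose t * (l + c).choose l * j.factorial *
        (k.factorial * PowerSeries.coeff k (bernoulliSeries m (-r : ZMod p)))) := by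
  choose b hb using fun i =>
    ZMod.intCast_surjective (PowerSeries.coeff i (bernoulliSeries m (-r : ZMod p)))
  have hsum := reducesTo_neg_prime_zpow_mul
    (residueSum_prime_pow_modEq_bernoulli r ha hs ht hmn hjk hj hn hb h)
  have hsign := (ReducesTo.intCast (p := p) ((-1) ^ (l + t + 1 + (p ^ (a - 1) * n + s)))).mul hsum
  rw [Fpa_prime_pow_eq ha l n hs, ediv_eq_of_eq_add_mul_add hj hjk hn]
  convert hsign using 1
  · push_cast
    ring
  · rw [← hb]
    rcases lt_or_ge s t with hst | hts
    · simp [Nat.choose_eq_zero_of_lt hst]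
    · have hfact := neg_one_pow_eq_factorial_mul_factorial (e := a - 1) hjk hn hts
      rw [pow_add _ _ (s - t)] at hfact
      push_cast
      linear_combination -(s.choose t * (l + c).choose l * b k : ZMod p) * hfact

lemma reducesTo_mul_bernHigherPoly (m : ℕ) (r : ℤ) (hjk : j + k + 1 = p) (hj : 1 ≤ j)
    (hn : n = l + (l + c) * (p - 1) + j) :
    ReducesTo p
      (s.choose t * ((n - l - 1) / (p - 1)).choose l * (nLow p (n - l)).factorial *
        bernHigherPoly m (nUp p (n - l)) (-r))
      (s.choose t * (l + c).choose l * j.factorial *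
        (k.factorial * PowerSeries.coeff k (bernoulliSeries m (-r : ZMod p)))) := by
  have hnl : n - l = (l + c) * (p - 1) + j := by omega
  have hbern := reducesTo_bernHigherPoly (p := p) m (k := k) (by omega) (-r)
  push_cast at hbern
  rw [hnl, nLow_mul_add _ hj hjk, nUp_mul_add _ hj hjk, mul_add_sub_one_div _ hj hjk]
  exact (((ReducesTo.natCast _).mul (ReducesTo.natCast _)).mul (ReducesTo.natCast _)).mul hbern

lemma choose_div_eq_zero (hl : l < n) (hln : n ≤ l * p) :
    ((n - l - 1) / (p - 1)).choose l = 0 := by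
  apply Nat.choose_eq_zero_of_lt
  rw [Nat.div_lt_iff_lt_mul (Nat.sub_pos_of_lt hp.out.one_lt), Nat.mul_sub_one]
  omega

end FleckBernoulli

end FleckQuotient

theorem stmt19_general (p a l n m s t : ℕ) (r : ℤ) (hp : p.Prime) (ha : 1 ≤ a)
    (hs : s < p ^ (a - 1)) (ht : t < p ^ (a - 1)) (hm : (m : ℤ) ≡ -(n : ℤ) [ZMOD (p : ℤ)])
    (hcase : a = 1 ∨ p ∣ n ∨ ¬ ((p : ℤ) - 1) ∣ (n : ℤ) - l - 1 ∨
      (p ≠ 2 ∧ s / p ^ (a - 2) = 2 * (t / p ^ (a - 2))) ∨ s / p ^ (a - 2) = p - 1) :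
    modCong p 1
      ((-1) ^ (l + t + 1) * Fpa p a l (p ^ (a - 1) * n + s) ((p : ℤ) ^ (a - 1) * r + t))
      (if l < n then
        (s.choose t : ℚ) * ((n - l - 1) / (p - 1)).choose l * (nLow p (n - l)).factorial *
          bernHigherPoly m (nUp p (n - l)) (-r)
       else 0) := by
  have : Fact p.Prime := ⟨hp⟩
  have hmn : p ∣ m + n := by
    simpa [← Int.natCast_dvd_natCast] using (hm.add_right (n : ℤ)).symm.dvd
  rcases lt_or_ge (l * p) n with hln | hln
  · obtain ⟨c, j, k, hj, hjk, hn⟩ := FleckQuotient.exists_eq_add_mul_add_of_mul_lt hln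
    rw [if_pos (show l < n by omega)]
    exact (FleckQuotient.reducesTo_Fpa r ha hs ht hmn hjk hj hn hcase).modCong
      (FleckQuotient.reducesTo_mul_bernHigherPoly m r hjk hj hn)
  · have hzero := (FleckQuotient.ReducesTo.intCast (p := p) ((-1) ^ (l + t + 1))).mul
      (FleckQuotient.reducesTo_Fpa_zero ((p : ℤ) ^ (a - 1) * r + t) ha hs hln)
    rw [mul_zero, Int.cast_pow, Int.cast_neg, Int.cast_one] at hzero
    convert hzero.modCong FleckQuotient.ReducesTo.zero using 1
    split_ifs with hl
    · simp [FleckQuotient.choose_div_eq_zero hl hln]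
    · rfl

theorem stmt19 (p a l n m s t : ℕ) (r : ℤ) (hp : p.Prime) (ha : 1 ≤ a)
    (hs : s < p^(a-1)) (ht : t < p^(a-1))
    (hm : (m:ℤ) ≡ -(n:ℤ) [ZMOD (p:ℤ)])
    (hcase : (a = 1 ∨ p ∣ n ∨ ¬ (((p:ℤ) - 1) ∣ ((n:ℤ) - (l:ℤ) - 1)))
      ∨ (2 ≤ a ∧ p ≠ 2 ∧ s / p^(a-2) = 2 * (t / p^(a-2)))
      ∨ (2 ≤ a ∧ s / p^(a-2) = p - 1 ∧ t / p^(a-2) = p - 1)) :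
    modCong p 1
      ((-1:ℚ)^(l+t+1) * Fpa p a l (p^(a-1)*n + s) ((p^(a-1) : ℤ) * r + (t:ℤ)))
      (if l < n then
        (s.choose t : ℚ) * (((n-l-1)/(p-1)).choose l : ℚ) *
          ((nLow p (n-l)).factorial : ℚ) * bernHigherPoly m (nUp p (n-l)) (-(r:ℚ))
       else 0) :=
  stmt19_general p a l n m s t r hp ha hs ht hm (by tauto)
end
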